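/- arXiv:2103.04720 — 2 statements merged into one kernel-verified Lean document; each statement's English description precedes it below -/
import Mathlib

section
/- Let f ∈ W^{1,1}(R^n) and α > 0. Let E be the set of points x where the limit f*(x) = lim_{ρ→0+} f_{B(x,ρ)} fails to exist, and let R_α = {x : sup_{ρ>0} |∇f|_{B(x,ρ)} ≤ α}. Then f* is Lipschitz continuous on R_α \ E with Lipschitz constant at most C(n) · α, where C(n) depends only on n; that is, |f*(x) - f*(y)| ≤ C(n) α |x - y| for all x, y ∈ R_α \ E. -/
open MeasureTheory Metric Filter Set
open scoped ENNReal Topology NNReal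

noncomputable section

/-- Euclidean space ℝⁿ. -/
abbrev En (n : ℕ) := EuclideanSpace ℝ (Fin n)

variable {n : ℕ}

/-- The average of `f` over the ball `B(x,r)`. -/
def ballAvg (f : En n → ℝ) (x : En n) (r : ℝ) : ℝ :=
  ⨍ y in Metric.ball x r, f y

open scoped Classical in
/-- The precise representative of `f`: the limit of ball averages where it exists, `0` otherwise. -/
def preciseRep (f : En n → ℝ) (x : En n) : ℝ :=
  if h : ∃ L : ℝ, Tendsto (fun r => ballAvg f x r) (nhdsWithin 0 (Set.Ioi 0)) (nhds L)
  then h.choose else 0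

/-- A test function: smooth, compactly supported, with support inside `Ω`. -/
def IsTest (Ω : Set (En n)) (η : En n → ℝ) : Prop :=
  ContDiff ℝ (⊤ : ℕ∞) η ∧ HasCompactSupport η ∧ tsupport η ⊆ Ω

/-- `g` is the weak partial derivative of `f` in direction `v`, on `Ω`. -/
def HasWeakPartialOn (Ω : Set (En n)) (f g : En n → ℝ) (v : En n) : Prop :=
  ∀ η : En n → ℝ, IsTest Ω η →
    ∫ x, f x * fderiv ℝ η x v = - ∫ x, g x * η x

/-- `g` is the weak gradient of `f` on `Ω`. -/
def HasWeakGradientOn (Ω : Set (En n)) (f : En n → ℝ) (g : En n → En n) : Prop :=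
  ∀ i : Fin n, HasWeakPartialOn Ω f (fun x => g x i) (EuclideanSpace.single i 1)

/-- `f ∈ W^{1,p}(ℝⁿ)` with weak gradient `g`. -/
def MemW1p (p : ℝ) (f : En n → ℝ) (g : En n → En n) : Prop :=
  AEStronglyMeasurable f volume ∧ AEStronglyMeasurable g volume ∧
  HasWeakGradientOn Set.univ f g ∧
  Integrable (fun x => |f x| ^ p) ∧ Integrable (fun x => ‖g x‖ ^ p)

/-- `f ∈ W^{1,p}_loc(Ω)` with weak gradient `g`. -/
def MemW1pLoc (p : ℝ) (Ω : Set (En n)) (f : En n → ℝ) (g : En n → En n) : Prop :=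
  AEStronglyMeasurable f volume ∧ AEStronglyMeasurable g volume ∧
  HasWeakGradientOn Ω f g ∧
  ∀ K : Set (En n), K ⊆ Ω → IsCompact K →
    IntegrableOn (fun x => |f x| ^ p) K ∧ IntegrableOn (fun x => ‖g x‖ ^ p) K

/-- `f ∈ W^{2,p}_loc(Ω)` with weak gradient `g` and weak second derivatives `h`. -/
def MemW2pLoc (p : ℝ) (Ω : Set (En n)) (f : En n → ℝ)
    (g : En n → En n) (h : En n → Fin n → En n) : Prop :=
  AEStronglyMeasurable f volume ∧ AEStronglyMeasurable g volume ∧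
  HasWeakGradientOn Ω f g ∧
  (∀ i : Fin n, HasWeakGradientOn Ω (fun x => g x i) (fun x => h x i)) ∧
  ∀ K : Set (En n), K ⊆ Ω → IsCompact K →
    IntegrableOn (fun x => |f x| ^ p) K ∧ IntegrableOn (fun x => ‖g x‖ ^ p) K ∧
    ∀ i : Fin n, IntegrableOn (fun x => ‖h x i‖ ^ p) K

/-- `f ∈ W^{2,p}(ℝⁿ)` with weak gradient `g` and weak second derivatives `h`. -/
def MemW2p (p : ℝ) (f : En n → ℝ) (g : En n → En n) (h : En n → Fin n → En n) : Prop :=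
  AEStronglyMeasurable f volume ∧ AEStronglyMeasurable g volume ∧
  HasWeakGradientOn Set.univ f g ∧
  (∀ i : Fin n, HasWeakGradientOn Set.univ (fun x => g x i) (fun x => h x i)) ∧
  Integrable (fun x => |f x| ^ p) ∧ Integrable (fun x => ‖g x‖ ^ p) ∧
  ∀ i : Fin n, Integrable (fun x => ‖h x i‖ ^ p)

/-- The `p`-capacity of a compact set. -/
def capK (p : ℝ) (F : Set (En n)) : ℝ≥0∞ :=
  ⨅ (g : En n → ℝ) (_ : ContDiff ℝ (⊤ : ℕ∞) g ∧ HasCompactSupport g ∧ ∀ x ∈ F, 1 ≤ g x),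
    ∫⁻ x, (‖fderiv ℝ g x‖₊ : ℝ≥0∞) ^ p

/-- The `p`-capacity of an open set, by inner regularity over compact subsets. -/
def capOpen (p : ℝ) (U : Set (En n)) : ℝ≥0∞ :=
  ⨆ (F : Set (En n)) (_ : F ⊆ U ∧ IsCompact F), capK p F

/-- The `p`-capacity of an arbitrary set, by outer regularity over open supersets. -/
def cap (p : ℝ) (E : Set (En n)) : ℝ≥0∞ :=
  ⨅ (U : Set (En n)) (_ : E ⊆ U ∧ IsOpen U), capOpen p U

/-- `f` restricted to `s` is Lipschitz outside a subset of `s` of `p`-capacity zero. -/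
def LipschitzOnQE (p : ℝ) (f : En n → ℝ) (s : Set (En n)) : Prop :=
  ∃ N : Set (En n), N ⊆ s ∧ cap p N = 0 ∧ ∃ K : ℝ≥0, LipschitzOnWith K f (s \ N)

/-- The multiplicity function: the number of preimages of `y` in `A` under `φ`. -/
def Nphi (φ : En n → En n) (A : Set (En n)) (y : En n) : ℝ≥0∞ :=
  Measure.count {x ∈ A | φ x = y}

end

/-!
Two balls `B(x, s)` and `B(z, s + t)` with `|x - z| ≤ t` are joined by a family of balls of radius
`ρ ∈ [s, s + t]` that are homothetic about a common center `p`. Up to a constant factor, the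
average of `f` over the ball of radius `ρ` is the integral of `f` against `ρ⁻ⁿ ψ((w - p) / ρ)`,
with `ψ` the indicator of a unit ball. For smooth `ψ` the derivative of this kernel in `ρ` is
minus the divergence of `ρ⁻ⁿ ψ((w - p) / ρ) (w - p) / ρ`, so integrating by parts turns the
derivative of the average into an integral of the weak gradient. Its absolute value is at most a
multiple of the average of `|∇f|` over `B(x, 2ρ)`, hence of `α`. Comparing the averages over
`B(x, s)` and `B(y, s)` with the average over a ball around the midpoint of `x` and `y`, and
letting `s → 0`, gives the Lipschitz bound.
-/

section Divergence

variable {E : Type*} [NormedAddCommGroup E] [NormedSpace ℝ E]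

/-- The divergence of a vector field `V`, defined without coordinates as the trace of its
derivative. It takes the junk value `0` where `V` is not differentiable, and everywhere if `E` is
infinite-dimensional. -/
noncomputable def divergence (V : E → E) (x : E) : ℝ :=
  LinearMap.trace ℝ E (fderiv ℝ V x)

lemma divergence_eq_trace {V : E → E} {V' : E →L[ℝ] E} {x : E} (hV : HasFDerivAt V V' x) :
    divergence V x = LinearMap.trace ℝ E V' := by
  rw [divergence, hV.fderiv]

lemma divergence_smul_self [FiniteDimensional ℝ E] {ψ : E → ℝ} {u : E}
    (hψ : DifferentiableAt ℝ ψ u) :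
    divergence (fun v => ψ v • v) u = Module.finrank ℝ E * ψ u + fderiv ℝ ψ u u := by
  refine (divergence_eq_trace (hψ.hasFDerivAt.smul (hasFDerivAt_id u))).trans ?_
  simp [mul_comm]

lemma divergence_comp_smul_sub {V : E → E} (hV : Differentiable ℝ V) (c : ℝ) (p w : E) :
    divergence (fun z => V (c • (z - p))) w = c * divergence V (c • (w - p)) := by
  have hdilation : HasFDerivAt (fun z : E => c • (z - p)) (c • ContinuousLinearMap.id ℝ E) w :=
    ((hasFDerivAt_id w).sub_const p).const_smul c
  refine (divergence_eq_trace ((hV _).hasFDerivAt.comp w hdilation)).trans ?_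
  simp [divergence]

lemma continuous_divergence [FiniteDimensional ℝ E] {V : E → E} (hV : ContDiff ℝ 1 V) :
    Continuous (divergence V) :=
  ((LinearMap.trace ℝ E ∘ₗ ContinuousLinearMap.coeLM ℝ).continuous_of_finiteDimensional).comp
    (hV.continuous_fderiv one_ne_zero)

lemma tsupport_divergence_subset {V : E → E} : tsupport (divergence V) ⊆ tsupport V :=
  (tsupport_comp_subset (g := fun A : E →L[ℝ] E => LinearMap.trace ℝ E A) (by simp) _).trans
    (tsupport_fderiv_subset ℝ)

lemma hasCompactSupport_divergence {V : E → E} (hV : HasCompactSupport V) :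
    HasCompactSupport (divergence V) :=
  hV.of_isClosed_subset (isClosed_tsupport _) tsupport_divergence_subset

lemma divergence_eq_sum_fderiv_coord {n : ℕ} {V : En n → En n} {x : En n}
    (hV : DifferentiableAt ℝ V x) :
    divergence V x = ∑ i, fderiv ℝ (fun z => V z i) x (EuclideanSpace.single i 1) := by
  rw [divergence, LinearMap.trace_eq_sum_inner _ (EuclideanSpace.basisFun (Fin n) ℝ)]
  refine Finset.sum_congr rfl fun i _ => ?_
  have hcoord : HasFDerivAt (fun z => V z i) (EuclideanSpace.proj i ∘L fderiv ℝ V x) x :=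
    (EuclideanSpace.proj (𝕜 := ℝ) i).hasFDerivAt.comp x hV.hasFDerivAt
  simp [hcoord.fderiv, EuclideanSpace.inner_single_left]

end Divergence

section WeakGradient

variable {n : ℕ}

lemma integrable_mul_of_tsupport_subset {X : Type*} [TopologicalSpace X] [T2Space X]
    [MeasurableSpace X] [OpensMeasurableSpace X] {μ : Measure X} {Ω : Set X} {f φ : X → ℝ}
    (hf : LocallyIntegrableOn f Ω μ) (hφ : Continuous φ) (hφc : HasCompactSupport φ)
    (hφΩ : tsupport φ ⊆ Ω) : Integrable (fun x => f x * φ x) μ := by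
  have hsupport : Function.support (fun x => f x * φ x) ⊆ tsupport φ :=
    (Function.support_mul_subset_right f φ).trans (subset_tsupport φ)
  rw [← integrableOn_iff_integrable_of_support_subset hsupport]
  exact (hf.integrableOn_compact_subset hφΩ hφc).mul_continuousOn hφ.continuousOn hφc

lemma HasWeakGradientOn.integral_mul_divergence {Ω : Set (En n)} {f : En n → ℝ} {g : En n → En n}
    (hfg : HasWeakGradientOn Ω f g) (hf : LocallyIntegrableOn f Ω) (hg : LocallyIntegrableOn g Ω)
    {V : En n → En n} (hV : ContDiff ℝ (⊤ : ℕ∞) V) (hVc : HasCompactSupport V)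
    (hVΩ : tsupport V ⊆ Ω) :
    ∫ x, f x * divergence V x = -∫ x, inner ℝ (g x) (V x) := by
  have htest (i : Fin n) : IsTest Ω (fun x => V x i) :=
    ⟨(EuclideanSpace.proj (𝕜 := ℝ) i).contDiff.comp hV,
      hVc.comp_left (g := fun v : En n => v i) rfl,
      (tsupport_comp_subset (g := fun v : En n => v i) rfl V).trans hVΩ⟩
  have hg_coord (i : Fin n) : LocallyIntegrableOn (fun x => g x i) Ω := fun x hx =>
    let ⟨s, hs, hgs⟩ := hg x hx
    ⟨s, hs, (EuclideanSpace.proj (𝕜 := ℝ) i).integrable_comp hgs⟩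
  have hint_f (i : Fin n) : Integrable fun x =>
      f x * fderiv ℝ (fun z => V z i) x (EuclideanSpace.single i 1) :=
    integrable_mul_of_tsupport_subset hf
      (((htest i).1.continuous_fderiv (by simp)).clm_apply continuous_const)
      ((htest i).2.1.fderiv_apply (𝕜 := ℝ) _)
      ((tsupport_fderiv_apply_subset ℝ _).trans (htest i).2.2)
  have hint_g (i : Fin n) : Integrable fun x => g x i * V x i :=
    integrable_mul_of_tsupport_subset (hg_coord i) (htest i).1.continuous (htest i).2.1
      (htest i).2.2
  have hdiv (x : En n) := divergence_eq_sum_fderiv_coord (hV.differentiable (by simp) x)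
  have hinner (x : En n) : inner ℝ (g x) (V x) = ∑ i, g x i * V x i := by
    simp [PiLp.inner_apply, mul_comm]
  simp_rw [hdiv, hinner, Finset.mul_sum]
  rw [integral_finsetSum _ fun i _ => hint_f i, integral_finsetSum _ fun i _ => hint_g i,
    ← Finset.sum_neg_distrib]
  exact Finset.sum_congr rfl fun i _ => hfg i _ (htest i)

end WeakGradient

section DilatedKernel

variable {E : Type*} [NormedAddCommGroup E] [NormedSpace ℝ E]

/-- The kernel obtained from the profile `ψ` by the homothety that sends `0` to `p` and has ratio
`ρ`, normalized so that its integral does not depend on `ρ > 0`. -/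
noncomputable def dilatedKernel (ψ : E → ℝ) (p : E) (ρ : ℝ) (w : E) : ℝ :=
  (ρ ^ Module.finrank ℝ E)⁻¹ * ψ (ρ⁻¹ • (w - p))

lemma continuous_dilatedKernel {ψ : E → ℝ} (hψ : Continuous ψ) (p : E) (ρ : ℝ) :
    Continuous (dilatedKernel ψ p ρ) := by
  unfold dilatedKernel
  fun_prop

lemma hasCompactSupport_comp_smul_sub {F : Type*} [Zero F] {V : E → F} (hV : HasCompactSupport V)
    {c : ℝ} (hc : c ≠ 0) (p : E) : HasCompactSupport fun w => V (c • (w - p)) :=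
  hV.comp_homeomorph ((Homeomorph.subRight p).trans (Homeomorph.smulOfNeZero c hc))

lemma hasDerivAt_dilatedKernel [FiniteDimensional ℝ E] {ψ : E → ℝ} (hψ : Differentiable ℝ ψ)
    (p w : E) {ρ : ℝ} (hρ : ρ ≠ 0) :
    HasDerivAt (fun r => dilatedKernel ψ p r w)
      (-(ρ ^ (Module.finrank ℝ E + 1))⁻¹ * divergence (fun v => ψ v • v) (ρ⁻¹ • (w - p))) ρ := by
  have harg : HasDerivAt (fun r : ℝ => r⁻¹ • (w - p)) (-(ρ ^ 2)⁻¹ • (w - p)) ρ :=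
    (hasDerivAt_inv hρ).smul_const _
  have hprofile := (hψ (ρ⁻¹ • (w - p))).hasFDerivAt.comp_hasDerivAt ρ harg
  have hscale := (hasDerivAt_pow (Module.finrank ℝ E) ρ).fun_inv (pow_ne_zero _ hρ)
  refine (hscale.mul hprofile).congr_deriv ?_
  rw [divergence_smul_self (hψ _)]
  simp only [map_smul, smul_eq_mul, Function.comp_apply]
  rcases Module.finrank ℝ E with _ | d
  · simp only [Nat.cast_zero]
    field_simp
    ring
  · simp only [Nat.add_sub_cancel]
    field_simp
    ring

lemma indicator_closedBall_mul_comp_smul_sub {ψ : E → ℝ} {T r R : ℝ}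
    (hψ : tsupport ψ ⊆ closedBall 0 T) (hT : 0 ≤ T) (hr : 0 < r) (hrR : r ≤ R) (f : E → ℝ)
    (p w : E) :
    (closedBall p (R * T)).indicator f w * ψ (r⁻¹ • (w - p)) = f w * ψ (r⁻¹ • (w - p)) := by
  by_cases hw : w ∈ closedBall p (R * T)
  · rw [indicator_of_mem hw]
  · have hnotMem : r⁻¹ • (w - p) ∉ tsupport ψ := fun hmem => hw <| by
      have hnorm := mem_closedBall_zero_iff.1 (hψ hmem)
      rw [norm_smul, norm_inv, Real.norm_of_nonneg hr.le, inv_mul_le_iff₀ hr] at hnorm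
      exact mem_closedBall_iff_norm.2 (hnorm.trans (by gcongr))
    simp [image_eq_zero_of_notMem_tsupport hnotMem]

variable [MeasurableSpace E] [BorelSpace E] [FiniteDimensional ℝ E] {μ : Measure E}

lemma hasDerivAt_integral_mul_dilatedKernel_of_integrable {ψ : E → ℝ} (hψ : ContDiff ℝ 1 ψ)
    (hψc : HasCompactSupport ψ) {f : E → ℝ} (hf : Integrable f μ) (p : E) {ρ : ℝ} (hρ : 0 < ρ) :
    HasDerivAt (fun r => ∫ w, f w * dilatedKernel ψ p r w ∂μ)
      (∫ w, f w * (-(ρ ^ (Module.finrank ℝ E + 1))⁻¹ *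
        divergence (fun v => ψ v • v) (ρ⁻¹ • (w - p))) ∂μ) ρ := by
  have hdivc : HasCompactSupport (divergence fun v => ψ v • v) :=
    hasCompactSupport_divergence hψc.smul_right
  have hdiv : Continuous (divergence fun v => ψ v • v) :=
    continuous_divergence (hψ.smul contDiff_id)
  obtain ⟨M, hM⟩ := hdivc.exists_bound_of_continuous hdiv
  obtain ⟨N, hN⟩ := hψc.exists_bound_of_continuous hψ.continuous
  have hkernel (r : ℝ) := (continuous_dilatedKernel hψ.continuous p r).aestronglyMeasurable (μ := μ)
  refine (hasDerivAt_integral_of_dominated_loc_of_deriv_le (s := Ioi (ρ / 2))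
    (F' := fun r w => f w * (-(r ^ (Module.finrank ℝ E + 1))⁻¹ *
        divergence (fun v => ψ v • v) (r⁻¹ • (w - p))))
    (bound := fun w => ‖f w‖ * (((ρ / 2) ^ (Module.finrank ℝ E + 1))⁻¹ * M))
    (Ioi_mem_nhds (by linarith)) ?_ ?_ ?_ ?_ (hf.norm.mul_const _) ?_).2
  · exact Eventually.of_forall fun r => hf.aestronglyMeasurable.mul (hkernel r)
  · refine hf.mul_bdd (c := (ρ ^ Module.finrank ℝ E)⁻¹ * N) (hkernel ρ) (.of_forall fun w => ?_)
    rw [dilatedKernel, norm_mul, Real.norm_of_nonneg (by positivity)]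
    gcongr
    exact hN _
  · exact hf.aestronglyMeasurable.mul (Continuous.aestronglyMeasurable (by fun_prop))
  · refine .of_forall fun w r (hr : ρ / 2 < r) => ?_
    have hr0 : 0 < r := by linarith
    rw [norm_mul, norm_mul, norm_neg, Real.norm_of_nonneg (by positivity : 0 ≤ (r ^ _)⁻¹)]
    gcongr
    exact hM _
  · exact .of_forall fun w r (hr : ρ / 2 < r) =>
      (hasDerivAt_dilatedKernel (hψ.differentiable one_ne_zero) p w (by linarith)).const_mul (f w)

lemma hasDerivAt_integral_mul_dilatedKernel {ψ : E → ℝ} (hψ : ContDiff ℝ 1 ψ)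
    (hψc : HasCompactSupport ψ) {f : E → ℝ} (hf : LocallyIntegrable f μ) (p : E) {ρ : ℝ}
    (hρ : 0 < ρ) :
    HasDerivAt (fun r => ∫ w, f w * dilatedKernel ψ p r w ∂μ)
      (∫ w, f w * (-(ρ ^ (Module.finrank ℝ E + 1))⁻¹ *
        divergence (fun v => ψ v • v) (ρ⁻¹ • (w - p))) ∂μ) ρ := by
  obtain ⟨T, hT, hψT⟩ := hψc.isCompact.isBounded.subset_closedBall_lt 0 0
  have hdivT : tsupport (divergence fun v => ψ v • v) ⊆ closedBall 0 T :=
    (tsupport_divergence_subset.trans (tsupport_smul_subset_left ψ id)).trans hψT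
  have hcutoff : Integrable ((closedBall p (2 * ρ * T)).indicator f) μ :=
    (hf.integrableOn_isCompact (isCompact_closedBall _ _)).integrable_indicator
      measurableSet_closedBall
  have hderiv (w : E) : (closedBall p (2 * ρ * T)).indicator f w *
      (-(ρ ^ (Module.finrank ℝ E + 1))⁻¹ * divergence (fun v => ψ v • v) (ρ⁻¹ • (w - p))) =
      f w * (-(ρ ^ (Module.finrank ℝ E + 1))⁻¹ *
        divergence (fun v => ψ v • v) (ρ⁻¹ • (w - p))) := by
    rw [mul_left_comm, indicator_closedBall_mul_comp_smul_sub hdivT hT.le hρ (by linarith),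
      mul_left_comm]
  have hkernel : (fun r => ∫ w, f w * dilatedKernel ψ p r w ∂μ) =ᶠ[𝓝 ρ]
      fun r => ∫ w, (closedBall p (2 * ρ * T)).indicator f w * dilatedKernel ψ p r w ∂μ := by
    filter_upwards [Ioo_mem_nhds hρ (by linarith : ρ < 2 * ρ)] with r hr
    refine integral_congr_ae (.of_forall fun w => ?_)
    simp only [dilatedKernel]
    rw [mul_left_comm, ← indicator_closedBall_mul_comp_smul_sub hψT hT.le hr.1 hr.2.le,
      mul_left_comm]
  simpa only [hderiv] using
    (hasDerivAt_integral_mul_dilatedKernel_of_integrable hψ hψc hcutoff p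
      hρ).congr_of_eventuallyEq hkernel

end DilatedKernel

section HomotheticBalls

lemma inv_smul_sub_mem_ball_iff {E : Type*} [NormedAddCommGroup E] [NormedSpace ℝ E] {e p w : E}
    {ρ : ℝ} (hρ : 0 < ρ) : ρ⁻¹ • (w - p) ∈ ball e 1 ↔ w ∈ ball (p + ρ • e) ρ := by
  have hdiff : ρ⁻¹ • (w - p) - e = ρ⁻¹ • (w - (p + ρ • e)) := by
    rw [← sub_sub, smul_sub ρ⁻¹ (w - p), inv_smul_smul₀ hρ.ne']
  rw [mem_ball_iff_norm, mem_ball_iff_norm, hdiff, norm_smul, norm_inv, Real.norm_of_nonneg hρ.le,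
    inv_mul_lt_one₀ hρ]

lemma norm_integral_dilatedKernel_mul_inner_le {E : Type*} [NormedAddCommGroup E]
    [InnerProductSpace ℝ E] [MeasurableSpace E] [OpensMeasurableSpace E] {μ : Measure E}
    {ψ : E → ℝ} {e : E} (he : ‖e‖ ≤ 1) (hψ : ∀ z, |ψ z| ≤ 1) (hψe : ∀ z ∉ ball e 1, ψ z = 0)
    {g : E → E} {p : E} {ρ : ℝ} (hρ : 0 < ρ) (hg : IntegrableOn g (ball (p + ρ • e) ρ) μ) :
    ‖∫ w, dilatedKernel ψ p ρ w * inner ℝ (g w) (ρ⁻¹ • (w - p)) ∂μ‖ ≤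
      2 * (ρ ^ Module.finrank ℝ E)⁻¹ * ∫ w in ball (p + ρ • e) ρ, ‖g w‖ ∂μ := by
  have hsupport : ∀ w ∉ ball (p + ρ • e) ρ,
      dilatedKernel ψ p ρ w * inner ℝ (g w) (ρ⁻¹ • (w - p)) = 0 := fun w hw => by
    rw [dilatedKernel, hψe _ (mt (inv_smul_sub_mem_ball_iff hρ).1 hw), mul_zero, zero_mul]
  rw [← setIntegral_eq_integral_of_forall_compl_eq_zero hsupport, ← integral_const_mul]
  refine norm_integral_le_of_norm_le (hg.norm.const_mul _)
    (ae_restrict_of_forall_mem measurableSet_ball fun w hw => ?_)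
  have hkernel : ‖dilatedKernel ψ p ρ w‖ ≤ (ρ ^ Module.finrank ℝ E)⁻¹ := by
    rw [dilatedKernel, norm_mul, Real.norm_of_nonneg (by positivity)]
    exact mul_le_of_le_one_right (by positivity) (hψ _)
  have hradius : ‖ρ⁻¹ • (w - p)‖ ≤ 2 := by
    have := mem_ball_iff_norm.1 ((inv_smul_sub_mem_ball_iff hρ).2 hw)
    linarith [norm_le_norm_add_norm_sub' (ρ⁻¹ • (w - p)) e]
  calc ‖dilatedKernel ψ p ρ w * inner ℝ (g w) (ρ⁻¹ • (w - p))‖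
      ≤ ‖dilatedKernel ψ p ρ w‖ * (‖g w‖ * ‖ρ⁻¹ • (w - p)‖) := by
        rw [norm_mul]
        gcongr
        exact norm_inner_le_norm _ _
    _ ≤ (ρ ^ Module.finrank ℝ E)⁻¹ * (‖g w‖ * 2) := by gcongr
    _ = 2 * (ρ ^ Module.finrank ℝ E)⁻¹ * ‖g w‖ := by ring

lemma exists_contDiffBump_seq {E : Type*} (e : E) {r : ℝ} (hr : 0 < r) :
    ∃ ψ : ℕ → ContDiffBump e,
      (∀ k, (ψ k).rOut = r) ∧ Tendsto (fun k => (ψ k).rIn) atTop (𝓝 r) := by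
  obtain ⟨u, -, hu, hlim⟩ := exists_seq_strictMono_tendsto' hr
  exact ⟨fun k => ⟨u k, r, (hu k).1, (hu k).2⟩, fun _ => rfl, hlim⟩

lemma tendsto_integral_mul_of_tendsto_one {X : Type*} [MeasurableSpace X] {μ : Measure X}
    {S : Set X} (hS : MeasurableSet S) {f : X → ℝ} (hf : IntegrableOn f S μ) {φ : ℕ → X → ℝ}
    (hφ : ∀ k, AEStronglyMeasurable (φ k) μ) (hφ_le : ∀ k x, |φ k x| ≤ 1)
    (hφ_zero : ∀ k, ∀ x ∉ S, φ k x = 0)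
    (hφ_one : ∀ x ∈ S, Tendsto (fun k => φ k x) atTop (𝓝 1)) :
    Tendsto (fun k => ∫ x, f x * φ k x ∂μ) atTop (𝓝 (∫ x in S, f x ∂μ)) := by
  have hrestrict (k : ℕ) : ∫ x, f x * φ k x ∂μ = ∫ x in S, f x * φ k x ∂μ :=
    (setIntegral_eq_integral_of_forall_compl_eq_zero fun x hx => by
      rw [hφ_zero k x hx, mul_zero]).symm
  simp_rw [hrestrict]
  refine tendsto_integral_of_dominated_convergence (fun x => ‖f x‖)
    (fun k => hf.aestronglyMeasurable.mul (hφ k).restrict) hf.norm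
    (fun k => .of_forall fun x => ?_) (ae_restrict_of_forall_mem hS fun x hx => ?_)
  · rw [norm_mul]
    exact mul_le_of_le_one_right (norm_nonneg _) (hφ_le k x)
  · simpa using (hφ_one x hx).const_mul (f x)

variable {n : ℕ}

lemma setIntegral_ball_eq_mul_ballAvg (f : En n → ℝ) (x : En n) {r : ℝ} (hr : 0 < r) :
    ∫ w in ball x r, f w = r ^ n * volume.real (ball (0 : En n) 1) * ballAvg f x r := by
  have hvol : volume.real (ball x r) = r ^ n * volume.real (ball (0 : En n) 1) := by
    rw [measureReal_def, Measure.addHaar_ball_of_pos _ _ hr, ENNReal.toReal_mul,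
      ENNReal.toReal_ofReal (by positivity), finrank_euclideanSpace_fin, measureReal_def]
  rw [← hvol, ballAvg, ← smul_eq_mul, measure_smul_setAverage _ measure_ball_lt_top.ne]

lemma tendsto_integral_mul_dilatedKernel {e : En n} {ψ : ℕ → ContDiffBump e}
    (hout : ∀ k, (ψ k).rOut = 1) (hin : Tendsto (fun k => (ψ k).rIn) atTop (𝓝 1))
    {f : En n → ℝ} {p : En n} {ρ : ℝ} (hρ : 0 < ρ) (hf : IntegrableOn f (ball (p + ρ • e) ρ)) :
    Tendsto (fun k => ∫ w, f w * dilatedKernel (ψ k) p ρ w) atTop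
      (𝓝 (volume.real (ball (0 : En n) 1) * ballAvg f (p + ρ • e) ρ)) := by
  have hlimit : Tendsto (fun k => ∫ w, f w * ψ k (ρ⁻¹ • (w - p))) atTop
      (𝓝 (∫ w in ball (p + ρ • e) ρ, f w)) := by
    refine tendsto_integral_mul_of_tendsto_one measurableSet_ball hf
      (fun k => ((ψ k).continuous.comp (by fun_prop)).aestronglyMeasurable)
      (fun k w => (abs_of_nonneg (ψ k).nonneg).trans_le (ψ k).le_one) (fun k w hw => ?_)
      fun w hw => ?_
    · rw [← inv_smul_sub_mem_ball_iff hρ, mem_ball, not_lt, ← hout k] at hw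
      exact (ψ k).zero_of_le_dist hw
    · rw [← inv_smul_sub_mem_ball_iff hρ] at hw
      refine tendsto_const_nhds.congr' ?_
      filter_upwards [hin.eventually_const_lt hw] with k hk
      exact ((ψ k).one_of_mem_closedBall hk.le).symm
  convert hlimit.const_mul (ρ ^ n)⁻¹ using 2 with k
  · simp_rw [dilatedKernel, finrank_euclideanSpace_fin, mul_left_comm (f _)]
    exact integral_const_mul _ _
  · rw [setIntegral_ball_eq_mul_ballAvg f _ hρ]
    field_simp

end HomotheticBalls

section Lipschitz

variable {n : ℕ} {f : En n → ℝ} {g : En n → En n}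

lemma HasWeakGradientOn.hasDerivAt_integral_mul_dilatedKernel
    (hfg : HasWeakGradientOn univ f g) (hf : LocallyIntegrable f) (hg : LocallyIntegrable g)
    {ψ : En n → ℝ} (hψ : ContDiff ℝ (⊤ : ℕ∞) ψ) (hψc : HasCompactSupport ψ) (p : En n) {ρ : ℝ}
    (hρ : 0 < ρ) :
    HasDerivAt (fun r => ∫ w, f w * dilatedKernel ψ p r w)
      (∫ w, dilatedKernel ψ p ρ w * inner ℝ (g w) (ρ⁻¹ • (w - p))) ρ := by
  have hfield : ContDiff ℝ (⊤ : ℕ∞) fun v => ψ v • v := hψ.smul contDiff_id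
  have hparts := hfg.integral_mul_divergence (locallyIntegrableOn_univ.2 hf)
    (locallyIntegrableOn_univ.2 hg) (V := fun w => ψ (ρ⁻¹ • (w - p)) • ρ⁻¹ • (w - p))
    (hfield.comp (by fun_prop))
    (hasCompactSupport_comp_smul_sub (V := fun v => ψ v • v) hψc.smul_right (inv_ne_zero hρ.ne') p)
    (subset_univ _)
  have hdiv (w : En n) :=
    divergence_comp_smul_sub (hfield.differentiable (by simp)) ρ⁻¹ p w
  refine (_root_.hasDerivAt_integral_mul_dilatedKernel (hψ.of_le (by simp)) hψc hf p
    hρ).congr_deriv ?_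
  calc ∫ w, f w * (-(ρ ^ (Module.finrank ℝ (En n) + 1))⁻¹ *
        divergence (fun v => ψ v • v) (ρ⁻¹ • (w - p)))
      = -(ρ ^ n)⁻¹ * ∫ w, f w * (ρ⁻¹ * divergence (fun v => ψ v • v) (ρ⁻¹ • (w - p))) := by
        rw [← integral_const_mul, finrank_euclideanSpace_fin]
        exact integral_congr_ae (.of_forall fun w => by ring)
    _ = (ρ ^ n)⁻¹ * ∫ w, inner ℝ (g w) (ψ (ρ⁻¹ • (w - p)) • ρ⁻¹ • (w - p)) := by
        simp_rw [← hdiv, hparts, neg_mul_neg]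
    _ = ∫ w, dilatedKernel ψ p ρ w * inner ℝ (g w) (ρ⁻¹ • (w - p)) := by
        rw [← integral_const_mul]
        simp_rw [dilatedKernel, finrank_euclideanSpace_fin, inner_smul_right _ _ (ψ _), mul_assoc]

variable {x y z e : En n} {α s t ρ R : ℝ}

lemma norm_integral_dilatedKernel_mul_inner_le_of_ballAvg_le (hg : LocallyIntegrable g)
    (hx : ∀ r, 0 < r → ballAvg (fun w => ‖g w‖) x r ≤ α) {ψ : En n → ℝ} (he : ‖e‖ ≤ 1)
    (hψ : ∀ z, |ψ z| ≤ 1) (hψe : ∀ z ∉ ball e 1, ψ z = 0) (hs : 0 < s) (hsρ : s ≤ ρ) :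
    ‖∫ w, dilatedKernel ψ (x - s • e) ρ w * inner ℝ (g w) (ρ⁻¹ • (w - (x - s • e)))‖ ≤
      2 ^ (n + 1) * volume.real (ball (0 : En n) 1) * α := by
  have hρ : 0 < ρ := hs.trans_le hsρ
  have hgball {c : En n} {r : ℝ} : IntegrableOn g (ball c r) :=
    (hg.integrableOn_isCompact (isCompact_closedBall c r)).mono_set ball_subset_closedBall
  have hsubset : ball (x - s • e + ρ • e) ρ ⊆ ball x (2 * ρ) := by
    refine ball_subset_ball' ?_
    have hcenter : x - s • e + ρ • e - x = (ρ - s) • e := by module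
    rw [dist_eq_norm, hcenter, norm_smul, Real.norm_of_nonneg (sub_nonneg.2 hsρ)]
    nlinarith
  calc _ ≤ 2 * (ρ ^ n)⁻¹ * ∫ w in ball (x - s • e + ρ • e) ρ, ‖g w‖ := by
        simpa only [finrank_euclideanSpace_fin] using
          norm_integral_dilatedKernel_mul_inner_le he hψ hψe hρ hgball
    _ ≤ 2 * (ρ ^ n)⁻¹ * ∫ w in ball x (2 * ρ), ‖g w‖ :=
        mul_le_mul_of_nonneg_left (setIntegral_mono_set hgball.norm
          (.of_forall fun _ => norm_nonneg _) hsubset.eventuallyLE) (by positivity)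
    _ = 2 ^ (n + 1) * volume.real (ball (0 : En n) 1) * ballAvg (fun w => ‖g w‖) x (2 * ρ) := by
        rw [setIntegral_ball_eq_mul_ballAvg _ _ (by positivity)]
        field_simp
        ring
    _ ≤ _ := by
        gcongr
        exact hx _ (by positivity)

lemma HasWeakGradientOn.abs_integral_mul_dilatedKernel_sub_le
    (hfg : HasWeakGradientOn univ f g) (hf : LocallyIntegrable f) (hg : LocallyIntegrable g)
    (hx : ∀ r, 0 < r → ballAvg (fun w => ‖g w‖) x r ≤ α) (he : ‖e‖ ≤ 1)
    {ψ : ContDiffBump e} (hψ : ψ.rOut = 1) (hs : 0 < s) (hsR : s ≤ R) :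
    |(∫ w, f w * dilatedKernel ψ (x - s • e) R w) -
        ∫ w, f w * dilatedKernel ψ (x - s • e) s w| ≤
      2 ^ (n + 1) * volume.real (ball (0 : En n) 1) * α * (R - s) := by
  have hψ_le (z : En n) : |ψ z| ≤ 1 := (abs_of_nonneg ψ.nonneg).trans_le ψ.le_one
  have hψ_zero : ∀ z ∉ ball e 1, ψ z = 0 := fun z hz =>
    ψ.zero_of_le_dist (hψ.trans_le (not_lt.1 hz))
  have hmean := (convex_Icc s R).norm_image_sub_le_of_norm_hasDerivWithin_le
    (fun ρ hρ => (hfg.hasDerivAt_integral_mul_dilatedKernel hf hg ψ.contDiff ψ.hasCompactSupport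
      (x - s • e) (hs.trans_le hρ.1)).hasDerivWithinAt)
    (fun ρ hρ => norm_integral_dilatedKernel_mul_inner_le_of_ballAvg_le hg hx he hψ_le hψ_zero hs
      hρ.1)
    (left_mem_Icc.2 hsR) (right_mem_Icc.2 hsR)
  rwa [Real.norm_of_nonneg (sub_nonneg.2 hsR)] at hmean

-- The balls `B(x - s e + ρ e, ρ)`, `s ≤ ρ ≤ s + t`, are homothetic about `x - s e` and lead from
-- `B(x, s)` to `B(z, s + t)`.
lemma HasWeakGradientOn.abs_ballAvg_sub_ballAvg_le_of_dist_le
    (hfg : HasWeakGradientOn univ f g) (hf : LocallyIntegrable f) (hg : LocallyIntegrable g)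
    (hx : ∀ r, 0 < r → ballAvg (fun w => ‖g w‖) x r ≤ α) (hs : 0 < s) (hxz : dist x z ≤ t) :
    |ballAvg f z (s + t) - ballAvg f x s| ≤ 2 ^ (n + 1) * α * t := by
  have ht : 0 ≤ t := dist_nonneg.trans hxz
  obtain ⟨e, he, rfl⟩ : ∃ e : En n, ‖e‖ ≤ 1 ∧ x + t • e = z := by
    rcases ht.eq_or_lt with rfl | ht
    · exact ⟨0, by simp, by simpa using hxz⟩
    · refine ⟨t⁻¹ • (z - x), ?_, by rw [smul_inv_smul₀ ht.ne', add_sub_cancel]⟩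
      rwa [norm_smul, norm_inv, Real.norm_of_nonneg ht.le, inv_mul_le_one₀ ht, ← dist_eq_norm,
        dist_comm]
  obtain ⟨ψ, hout, hin⟩ := exists_contDiffBump_seq e one_pos
  have hfball {c : En n} {r : ℝ} : IntegrableOn f (ball c r) :=
    (hf.integrableOn_isCompact (isCompact_closedBall c r)).mono_set ball_subset_closedBall
  have hlimit (ρ : ℝ) (hρ : 0 < ρ) :=
    tendsto_integral_mul_dilatedKernel hout hin (p := x - s • e) hρ hfball
  have hbound := le_of_tendsto' ((hlimit (s + t) (by positivity)).sub (hlimit s hs)).abs fun k =>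
    hfg.abs_integral_mul_dilatedKernel_sub_le hf hg hx he (hout k) hs (le_add_of_nonneg_right ht)
  have hvol : 0 < volume.real (ball (0 : En n) 1) :=
    ENNReal.toReal_pos (measure_ball_pos _ _ one_pos).ne' measure_ball_lt_top.ne
  have hend : x - s • e + (s + t) • e = x + t • e := by module
  rw [hend, sub_add_cancel, ← mul_sub, abs_mul, abs_of_pos hvol, add_sub_cancel_left] at hbound
  exact le_of_mul_le_mul_left (hbound.trans_eq (by ring)) hvol

lemma HasWeakGradientOn.abs_ballAvg_sub_ballAvg_le
    (hfg : HasWeakGradientOn univ f g) (hf : LocallyIntegrable f) (hg : LocallyIntegrable g)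
    (hx : ∀ r, 0 < r → ballAvg (fun w => ‖g w‖) x r ≤ α)
    (hy : ∀ r, 0 < r → ballAvg (fun w => ‖g w‖) y r ≤ α) (hs : 0 < s) :
    |ballAvg f x s - ballAvg f y s| ≤ 2 ^ (n + 1) * α * dist x y := by
  have hxm := hfg.abs_ballAvg_sub_ballAvg_le_of_dist_le hf hg hx hs
    (dist_left_midpoint (𝕜 := ℝ) x y).le
  have hym := hfg.abs_ballAvg_sub_ballAvg_le_of_dist_le hf hg hy hs
    (dist_right_midpoint (𝕜 := ℝ) x y).le
  rw [Real.norm_two] at hxm hym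
  rw [abs_sub_comm] at hxm
  linarith [abs_sub_le (ballAvg f x s)
    (ballAvg f (midpoint ℝ x y) (s + 2⁻¹ * dist x y)) (ballAvg f y s)]

lemma tendsto_ballAvg_preciseRep
    (h : ∃ L : ℝ, Tendsto (fun r => ballAvg f x r) (𝓝[>] 0) (𝓝 L)) :
    Tendsto (fun r => ballAvg f x r) (𝓝[>] 0) (𝓝 (preciseRep f x)) := by
  rw [preciseRep, dif_pos h]
  exact h.choose_spec

lemma MemW1p.memW1pLoc {p : ℝ} (h : MemW1p p f g) (Ω : Set (En n)) : MemW1pLoc p Ω f g :=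
  ⟨h.1, h.2.1, fun i η hη => h.2.2.1 i η ⟨hη.1, hη.2.1, subset_univ _⟩,
    fun _ _ _ => ⟨h.2.2.2.1.integrableOn, h.2.2.2.2.integrableOn⟩⟩

lemma MemW1pLoc.locallyIntegrableOn {Ω : Set (En n)} (h : MemW1pLoc 1 Ω f g)
    (hΩ : IsLocallyClosed Ω) : LocallyIntegrableOn f Ω := by
  refine (locallyIntegrableOn_iff hΩ).2 fun K hKΩ hK => (integrable_norm_iff h.1.restrict).1 ?_
  simpa only [Real.rpow_one, IntegrableOn, Real.norm_eq_abs] using (h.2.2.2 K hKΩ hK).1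

lemma MemW1pLoc.locallyIntegrableOn_gradient {Ω : Set (En n)} (h : MemW1pLoc 1 Ω f g)
    (hΩ : IsLocallyClosed Ω) : LocallyIntegrableOn g Ω := by
  refine (locallyIntegrableOn_iff hΩ).2 fun K hKΩ hK => (integrable_norm_iff h.2.1.restrict).1 ?_
  simpa only [Real.rpow_one, IntegrableOn] using (h.2.2.2 K hKΩ hK).2

end Lipschitz

theorem preciseRep_lipschitz_on_Ralpha_general {n : ℕ} {f : En n → ℝ} {g : En n → En n}
    (hfg : MemW1pLoc 1 univ f g) {α : ℝ} {x y : En n}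
    (hx : x ∈ {z : En n | ∀ ρ : ℝ, 0 < ρ → ballAvg (fun w => ‖g w‖) z ρ ≤ α} \
      {z : En n | ¬ ∃ L : ℝ, Tendsto (fun ρ => ballAvg f z ρ) (𝓝[>] 0) (𝓝 L)})
    (hy : y ∈ {z : En n | ∀ ρ : ℝ, 0 < ρ → ballAvg (fun w => ‖g w‖) z ρ ≤ α} \
      {z : En n | ¬ ∃ L : ℝ, Tendsto (fun ρ => ballAvg f z ρ) (𝓝[>] 0) (𝓝 L)}) :
    |preciseRep f x - preciseRep f y| ≤ 2 ^ (n + 1) * α * dist x y := by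
  have hf := locallyIntegrableOn_univ.1 (hfg.locallyIntegrableOn isOpen_univ.isLocallyClosed)
  have hg := locallyIntegrableOn_univ.1
    (hfg.locallyIntegrableOn_gradient isOpen_univ.isLocallyClosed)
  have hlimit := ((tendsto_ballAvg_preciseRep (not_not.1 hx.2)).sub
    (tendsto_ballAvg_preciseRep (not_not.1 hy.2))).abs
  refine le_of_tendsto hlimit ?_
  filter_upwards [self_mem_nhdsWithin] with s hs
  exact hfg.2.2.1.abs_ballAvg_sub_ballAvg_le hf hg hx.1 hy.1 hs

/-- the precise representative is Lipschitz on `R_α \ E` with constant `C(n)·α`. -/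
theorem preciseRep_lipschitz_on_Ralpha {n : ℕ} :
    ∃ C : ℝ, 0 < C ∧
      ∀ (f : En n → ℝ) (g : En n → En n), MemW1p 1 f g →
        ∀ α : ℝ, 0 < α →
          ∀ x y : En n,
            x ∈ {z : En n | ∀ ρ : ℝ, 0 < ρ → ballAvg (fun w => ‖g w‖) z ρ ≤ α} \
              {z : En n | ¬ ∃ L : ℝ, Filter.Tendsto (fun ρ => ballAvg f z ρ)
                (nhdsWithin 0 (Set.Ioi 0)) (nhds L)} →
            y ∈ {z : En n | ∀ ρ : ℝ, 0 < ρ → ballAvg (fun w => ‖g w‖) z ρ ≤ α} \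
              {z : En n | ¬ ∃ L : ℝ, Filter.Tendsto (fun ρ => ballAvg f z ρ)
                (nhdsWithin 0 (Set.Ioi 0)) (nhds L)} →
            |preciseRep f x - preciseRep f y| ≤ C * α * dist x y :=
  ⟨2 ^ (n + 1), by positivity, fun _ _ hfg _ _ _ _ hx hy =>
    preciseRep_lipschitz_on_Ralpha_general (hfg.memW1pLoc univ) hx hy⟩
end

section
/- Let p ≥ 1, f ∈ W^{1,p}(R^n), and α > 0. Define R_α = {x ∈ R^n : sup_{ρ>0} f_{B(x,ρ)} ≤ α}. Then the p-capacity of R^n \ R_α is at most C(n,p) α^{-p} ‖∇f‖_{L^p(R^n)}^p. -/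
open MeasureTheory Metric Filter Set
open scoped ENNReal Topology NNReal

/-!
It suffices to bound the capacity of a compact set `F` on which some average of `f` over a ball
centred at the point exceeds `α`. The averages of a fine mollification `u` of `f` are still at
least `α`, and `u` is smooth, Lipschitz and vanishes at infinity. By Besicovitch's theorem `F` is
covered by finitely many of these balls `B` with bounded overlap. With `u_B` the average of `u` over
`B`, extend each `u_B - u` from `B` to the whole space by inversion and a cutoff; by Poincaré's
inequality the energy of the extension is at most `C ∫_B ‖∇u‖ᵖ`, so the maximum `H` of the
extensions has energy at most `C ∫ ‖∇u‖ᵖ`. On `F` we have `u + H ≥ α`, and a truncation of `u + H`,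
mollified once more, is a competitor for the capacity.
-/

section Jensen

variable {Ω : Type*} [MeasurableSpace Ω] {μ : Measure Ω} [IsProbabilityMeasure μ] {p : ℝ}

lemma rpow_lintegral_le_lintegral_rpow {f : Ω → ℝ≥0∞} (hf : AEMeasurable f μ) (hp : 1 ≤ p) :
    (∫⁻ x, f x ∂μ) ^ p ≤ ∫⁻ x, f x ^ p ∂μ := by
  have hp0 : 0 < p := zero_lt_one.trans_le hp
  have h := eLpNorm'_le_eLpNorm'_of_exponent_le zero_lt_one hp μ hf.aestronglyMeasurable
  simp only [eLpNorm', ENNReal.rpow_one, enorm_eq_self, div_one] at h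
  rwa [one_div, ENNReal.le_rpow_inv_iff hp0] at h

lemma enorm_integral_rpow_le_lintegral_enorm_rpow {F : Type*} [NormedAddCommGroup F]
    [NormedSpace ℝ F] {f : Ω → F} (hf : AEStronglyMeasurable f μ) (hp : 1 ≤ p) :
    ‖∫ x, f x ∂μ‖ₑ ^ p ≤ ∫⁻ x, ‖f x‖ₑ ^ p ∂μ :=
  (ENNReal.rpow_le_rpow (enorm_integral_le_lintegral_enorm f) (by linarith)).trans
    (rpow_lintegral_le_lintegral_rpow hf.enorm hp)

end Jensen

section ChangeOfVariables

variable {E : Type*} [NormedAddCommGroup E] [NormedSpace ℝ E] [FiniteDimensional ℝ E]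
  [MeasurableSpace E] [BorelSpace E] (μ : Measure E) [μ.IsAddHaarMeasure]

lemma setLIntegral_comp_le_of_one_le_mul_abs_det {s B : Set E} {T : E → E} {T' : E → E →L[ℝ] E}
    {K : ℝ≥0∞} (hK : K ≠ ∞) (hs : MeasurableSet s) (hT' : ∀ x ∈ s, HasFDerivAt T (T' x) x)
    (hT : InjOn T s) (hmaps : MapsTo T s B) (hdet : ∀ x ∈ s, 1 ≤ K * ENNReal.ofReal |(T' x).det|)
    (G : E → ℝ≥0∞) :
    ∫⁻ x in s, G (T x) ∂μ ≤ K * ∫⁻ y in B, G y ∂μ :=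
  calc ∫⁻ x in s, G (T x) ∂μ
      ≤ ∫⁻ x in s, K * (ENNReal.ofReal |(T' x).det| * G (T x)) ∂μ := by
        refine setLIntegral_mono' hs fun x hx => ?_
        rw [← mul_assoc]
        exact le_mul_of_one_le_left' (hdet x hx)
    _ = K * ∫⁻ y in T '' s, G y ∂μ := by
        rw [lintegral_const_mul' _ _ hK, lintegral_image_eq_lintegral_abs_det_fderiv_mul μ hs
          (fun x hx => (hT' x hx).hasFDerivWithinAt) hT]
    _ ≤ K * ∫⁻ y in B, G y ∂μ := by
        gcongr
        exact hmaps.image_subset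

lemma setLIntegral_comp_lineMap_le {B : Set E} (hB : Convex ℝ B) (hBm : MeasurableSet B) {a : E}
    (ha : a ∈ B) {c : ℝ} (hc : 1 / 2 ≤ c) (hc1 : c ≤ 1) (G : E → ℝ≥0∞) :
    ∫⁻ y in B, G (AffineMap.lineMap a y c) ∂μ ≤
      2 ^ Module.finrank ℝ E * ∫⁻ y in B, G y ∂μ := by
  have hc0 : 0 < c := by linarith
  refine setLIntegral_comp_le_of_one_le_mul_abs_det μ (T' := fun _ => c • .id ℝ E)
    (by finiteness) hBm (fun y _ => ?_) (fun y _ z _ hyz => ?_)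
    (fun y hy => hB.lineMap_mem ha hy ⟨hc0.le, hc1⟩) (fun y _ => ?_) G
  · simp only [AffineMap.lineMap_apply]
    exact (((hasFDerivAt_id y).sub_const a).const_smul c).add_const a
  · simpa [AffineMap.lineMap_apply, hc0.ne'] using hyz
  · have hdet : (c • ContinuousLinearMap.id ℝ E).det = c ^ Module.finrank ℝ E := by
      simp [ContinuousLinearMap.det]
    rw [hdet, abs_of_pos (by positivity), ENNReal.ofReal_pow hc0.le, ← mul_pow]
    refine one_le_pow₀ ?_
    rw [← ENNReal.ofReal_ofNat, ← ENNReal.ofReal_mul two_pos.le, ENNReal.one_le_ofReal]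
    linarith

end ChangeOfVariables

section Poincare

variable {E F : Type*} [NormedAddCommGroup E] [NormedSpace ℝ E] [NormedAddCommGroup F]
  [NormedSpace ℝ F] {u : E → F} {p : ℝ}

lemma enorm_sub_rpow_le_lintegral_fderiv (hu : ContDiff ℝ 1 u) (hp : 1 ≤ p) (y z : E) :
    ‖u y - u z‖ₑ ^ p ≤ ‖y - z‖ₑ ^ p *
      ∫⁻ s in Icc (0 : ℝ) 1, ‖fderiv ℝ u (AffineMap.lineMap z y s)‖ₑ ^ p := by
  have : IsProbabilityMeasure (volume.restrict (Icc (0 : ℝ) 1)) := ⟨by simp⟩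
  have hlineMap : ContDiff ℝ 1 (AffineMap.lineMap z y : ℝ → E) :=
    AffineMap.contDiff_lineMap z y
  have hderiv (s : ℝ) : deriv (fun s : ℝ => u (AffineMap.lineMap z y s)) s =
      fderiv ℝ u (AffineMap.lineMap z y s) (y - z) :=
    ((hu.differentiable one_ne_zero _).hasFDerivAt.comp_hasDerivAt s
      AffineMap.hasDerivAt_lineMap).deriv
  have hcont : Continuous fun s : ℝ => ‖fderiv ℝ u (AffineMap.lineMap z y s)‖ₑ :=
    ((hu.continuous_fderiv one_ne_zero).comp hlineMap.continuous).enorm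
  have hftc : ‖u y - u z‖ₑ ≤
      ‖y - z‖ₑ * ∫⁻ s in Icc (0 : ℝ) 1, ‖fderiv ℝ u (AffineMap.lineMap z y s)‖ₑ := by
    have h := enorm_sub_le_lintegral_deriv_of_contDiffOn_Icc
      (hu.comp hlineMap).contDiffOn zero_le_one
    simp only [Function.comp_apply, AffineMap.lineMap_apply_one, AffineMap.lineMap_apply_zero] at h
    rw [← lintegral_const_mul' _ _ enorm_ne_top]
    refine h.trans (lintegral_mono fun s => ?_)
    rw [Function.comp_def, hderiv, mul_comm]
    exact ContinuousLinearMap.le_opENorm _ _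
  calc ‖u y - u z‖ₑ ^ p
      ≤ (‖y - z‖ₑ * ∫⁻ s in Icc (0 : ℝ) 1, ‖fderiv ℝ u (AffineMap.lineMap z y s)‖ₑ) ^ p := by
        gcongr
    _ = ‖y - z‖ₑ ^ p * (∫⁻ s in Icc (0 : ℝ) 1, ‖fderiv ℝ u (AffineMap.lineMap z y s)‖ₑ) ^ p :=
        ENNReal.mul_rpow_of_nonneg _ _ (by linarith)
    _ ≤ _ := by
        gcongr
        exact rpow_lintegral_le_lintegral_rpow hcont.aemeasurable hp

variable [FiniteDimensional ℝ E] [MeasurableSpace E] [BorelSpace E]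
  (μ : Measure E) [μ.IsAddHaarMeasure] {B : Set E}

lemma lintegral_lintegral_comp_lineMap_le {G : E → ℝ≥0∞} (hG : Continuous G) (hB : Convex ℝ B)
    (hBm : MeasurableSet B) {s : ℝ} (hs : s ∈ Icc (0 : ℝ) 1) :
    ∫⁻ y in B, ∫⁻ z in B, G (AffineMap.lineMap z y s) ∂μ ∂μ ≤
      2 ^ Module.finrank ℝ E * μ B * ∫⁻ y in B, G y ∂μ := by
  have hconst : ∫⁻ _ in B, 2 ^ Module.finrank ℝ E * ∫⁻ y in B, G y ∂μ ∂μ =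
      2 ^ Module.finrank ℝ E * μ B * ∫⁻ y in B, G y ∂μ := by
    rw [setLIntegral_const]
    ring
  rw [← hconst]
  rcases le_total (1 / 2) s with hhalf | hhalf
  · have hcont : Continuous fun q : E × E => G (AffineMap.lineMap q.2 q.1 s) := by fun_prop
    rw [lintegral_lintegral_swap hcont.aemeasurable]
    exact setLIntegral_mono' hBm fun z hz => setLIntegral_comp_lineMap_le μ hB hBm hz hhalf hs.2 G
  · refine setLIntegral_mono' hBm fun y hy => ?_
    simpa only [AffineMap.lineMap_apply_one_sub] using
      setLIntegral_comp_lineMap_le μ hB hBm hy (c := 1 - s) (by linarith) (by linarith [hs.1]) G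

lemma lintegral_lintegral_enorm_sub_rpow_le (hu : ContDiff ℝ 1 u) (hp : 1 ≤ p)
    (hB : Convex ℝ B) (hBm : MeasurableSet B) {R : ℝ≥0} (hR : ∀ y ∈ B, ∀ z ∈ B, edist y z ≤ R) :
    ∫⁻ y in B, ∫⁻ z in B, ‖u y - u z‖ₑ ^ p ∂μ ∂μ ≤
      R ^ p * (2 ^ Module.finrank ℝ E * μ B * ∫⁻ y in B, ‖fderiv ℝ u y‖ₑ ^ p ∂μ) := by
  set G : E → ℝ≥0∞ := fun y => ‖fderiv ℝ u y‖ₑ ^ p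
  have hG : Continuous G :=
    ENNReal.continuous_rpow_const.comp (hu.continuous_fderiv one_ne_zero).enorm
  have hcont : Continuous fun q : (E × ℝ) × E => G (AffineMap.lineMap q.2 q.1.1 q.1.2) := by
    fun_prop
  have hswap (y : E) :
      ∫⁻ z in B, (∫⁻ s in Icc (0 : ℝ) 1, G (AffineMap.lineMap z y s)) ∂μ =
        ∫⁻ s in Icc (0 : ℝ) 1, ∫⁻ z in B, G (AffineMap.lineMap z y s) ∂μ :=
    lintegral_lintegral_swap
      (by fun_prop : Continuous fun q : E × ℝ => G (AffineMap.lineMap q.1 y q.2)).aemeasurable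
  have hRp : (R : ℝ≥0∞) ^ p ≠ ∞ := by finiteness
  calc ∫⁻ y in B, ∫⁻ z in B, ‖u y - u z‖ₑ ^ p ∂μ ∂μ
      ≤ ∫⁻ y in B, ∫⁻ z in B,
          R ^ p * (∫⁻ s in Icc (0 : ℝ) 1, G (AffineMap.lineMap z y s)) ∂μ ∂μ := by
        refine setLIntegral_mono' hBm fun y hy => setLIntegral_mono' hBm fun z hz => ?_
        refine (enorm_sub_rpow_le_lintegral_fderiv hu hp y z).trans ?_
        gcongr
        exact edist_eq_enorm_sub y z ▸ hR y hy z hz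
    _ = R ^ p * ∫⁻ y in B, ∫⁻ z in B,
          (∫⁻ s in Icc (0 : ℝ) 1, G (AffineMap.lineMap z y s)) ∂μ ∂μ := by
        simp_rw [lintegral_const_mul' _ _ hRp]
    _ = R ^ p * ∫⁻ s in Icc (0 : ℝ) 1, ∫⁻ y in B, ∫⁻ z in B, G (AffineMap.lineMap z y s) ∂μ ∂μ := by
        simp_rw [hswap]
        rw [lintegral_lintegral_swap
          (hcont.measurable.lintegral_prod_right' (ν := μ.restrict B)).aemeasurable]
    _ ≤ R ^ p * ∫⁻ s in Icc (0 : ℝ) 1, 2 ^ Module.finrank ℝ E * μ B * ∫⁻ y in B, G y ∂μ := by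
        gcongr 1
        exact setLIntegral_mono' measurableSet_Icc fun s hs =>
          lintegral_lintegral_comp_lineMap_le μ hG hB hBm hs
    _ = R ^ p * (2 ^ Module.finrank ℝ E * μ B * ∫⁻ y in B, ‖fderiv ℝ u y‖ₑ ^ p ∂μ) := by
        rw [setLIntegral_const]
        simp [G]

theorem lintegral_enorm_sub_average_rpow_le [CompleteSpace F] (hu : ContDiff ℝ 1 u) (hp : 1 ≤ p)
    {x : E} {r : ℝ} (hr : 0 < r) :
    ∫⁻ y in ball x r, ‖(⨍ z in ball x r, u z ∂μ) - u y‖ₑ ^ p ∂μ ≤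
      ENNReal.ofReal (2 * r) ^ p * 2 ^ Module.finrank ℝ E *
        ∫⁻ y in ball x r, ‖fderiv ℝ u y‖ₑ ^ p ∂μ := by
  set B := ball x r
  have hB0 : μ B ≠ 0 := (measure_ball_pos μ x hr).ne'
  have hBtop : μ B ≠ ∞ := measure_ball_lt_top.ne
  have : IsProbabilityMeasure ((μ B)⁻¹ • μ.restrict B) :=
    ⟨by simp [ENNReal.inv_mul_cancel hB0 hBtop]⟩
  have hint : Integrable u ((μ B)⁻¹ • μ.restrict B) :=
    ((hu.continuous.continuousOn.integrableOn_compact (isCompact_closedBall x r)).mono_set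
      ball_subset_closedBall).smul_measure (ENNReal.inv_ne_top.2 hB0)
  have hjensen (y : E) : ‖(⨍ z in B, u z ∂μ) - u y‖ₑ ^ p ≤
      (μ B)⁻¹ * ∫⁻ z in B, ‖u y - u z‖ₑ ^ p ∂μ := by
    have hsub : (⨍ z in B, u z ∂μ) - u y = ∫ z, (u z - u y) ∂((μ B)⁻¹ • μ.restrict B) := by
      rw [integral_sub hint (integrable_const _), average, Measure.restrict_apply_univ]
      simp
    rw [hsub, ← smul_eq_mul, ← lintegral_smul_measure]
    simp_rw [enorm_sub_rev (u y)]
    exact enorm_integral_rpow_le_lintegral_enorm_rpow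
      (hint.sub (integrable_const _)).aestronglyMeasurable hp
  have hdiam : ∀ y ∈ B, ∀ z ∈ B, edist y z ≤ (2 * r).toNNReal := fun y hy z hz => by
    rw [edist_dist]
    refine ENNReal.ofReal_le_ofReal ((dist_triangle_right y z x).trans ?_)
    rw [two_mul]
    exact (add_lt_add hy hz).le
  calc ∫⁻ y in B, ‖(⨍ z in B, u z ∂μ) - u y‖ₑ ^ p ∂μ
      ≤ (μ B)⁻¹ * ∫⁻ y in B, ∫⁻ z in B, ‖u y - u z‖ₑ ^ p ∂μ ∂μ := by
        rw [← lintegral_const_mul' _ _ (ENNReal.inv_ne_top.2 hB0)]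
        exact lintegral_mono hjensen
    _ ≤ (μ B)⁻¹ * (ENNReal.ofReal (2 * r) ^ p *
          (2 ^ Module.finrank ℝ E * μ B * ∫⁻ y in B, ‖fderiv ℝ u y‖ₑ ^ p ∂μ)) := by
        gcongr
        exact lintegral_lintegral_enorm_sub_rpow_le μ hu hp (convex_ball x r) measurableSet_ball
          hdiam
    _ = (μ B)⁻¹ * μ B * (ENNReal.ofReal (2 * r) ^ p * 2 ^ Module.finrank ℝ E *
          ∫⁻ y in B, ‖fderiv ℝ u y‖ₑ ^ p ∂μ) := by ring
    _ = _ := by rw [ENNReal.inv_mul_cancel hB0 hBtop, one_mul]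

end Poincare

lemma lipschitzWith_mul_of_norm_le {X : Type*} [PseudoMetricSpace X] {a b : X → ℝ}
    {Ka Kb A B : ℝ≥0} (ha : LipschitzWith Ka a) (hb : LipschitzWith Kb b) (hA : ∀ x, ‖a x‖ ≤ A)
    (hB : ∀ x, ‖b x‖ ≤ B) : LipschitzWith (A * Kb + B * Ka) fun x => a x * b x := by
  refine .of_dist_le_mul fun x y => ?_
  calc dist (a x * b x) (a y * b y)
      = ‖a x * (b x - b y) + b y * (a x - a y)‖ := by
        rw [Real.dist_eq, Real.norm_eq_abs]
        ring_nf
    _ ≤ ‖a x‖ * dist (b x) (b y) + ‖b y‖ * dist (a x) (a y) := by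
        refine (norm_add_le _ _).trans_eq ?_
        rw [norm_mul, norm_mul, dist_eq_norm, dist_eq_norm]
    _ ≤ A * (Kb * dist x y) + B * (Ka * dist x y) := by
        gcongr
        exacts [hA x, hb.dist_le_mul x y, hB y, ha.dist_le_mul x y]
    _ = ↑(A * Kb + B * Ka) * dist x y := by
        push_cast
        ring

/-- The Lipschitz cutoff that equals `1` on `ball x r`, vanishes off `ball x (2 * r)` and decays
linearly in between. -/
noncomputable def ballCutoff {X : Type*} [PseudoMetricSpace X] (x : X) (r : ℝ) (y : X) : ℝ :=
  max 0 (min 1 (2 - dist y x / r))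

section BallCutoff

variable {X : Type*} [PseudoMetricSpace X] {x : X} {r : ℝ}

lemma lipschitzWith_ballCutoff (x : X) (r : ℝ≥0) : LipschitzWith r⁻¹ (ballCutoff x r) := by
  have hdist : LipschitzWith r⁻¹ fun y => 2 - dist y x / r := by
    refine .of_dist_le_mul fun y z => ?_
    rw [dist_sub_left, Real.dist_eq, ← sub_div, abs_div, NNReal.abs_eq, NNReal.coe_inv,
      div_eq_inv_mul]
    gcongr
    exact abs_dist_sub_le y z x
  exact (hdist.const_min 1).const_max 0

lemma norm_ballCutoff_le_one (y : X) : ‖ballCutoff x r y‖ ≤ 1 := by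
  rw [Real.norm_eq_abs, abs_of_nonneg (le_max_left _ _)]
  exact max_le zero_le_one (min_le_left _ _)

lemma ballCutoff_eq_one {y : X} (hy : y ∈ ball x r) : ballCutoff x r y = 1 := by
  have hr : 0 < r := pos_of_mem_ball hy
  have : dist y x / r ≤ 1 := (div_le_one hr).2 (mem_ball.1 hy).le
  rw [ballCutoff, min_eq_left (by linarith), max_eq_right zero_le_one]

lemma ballCutoff_eq_zero (hr : 0 < r) {y : X} (hy : y ∉ ball x (2 * r)) :
    ballCutoff x r y = 0 := by
  have : 2 ≤ dist y x / r := (le_div_iff₀ hr).2 (not_lt.1 hy)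
  exact max_eq_left ((min_le_right _ _).trans (by linarith))

end BallCutoff

section Fold

variable {E : Type*} [NormedAddCommGroup E] [InnerProductSpace ℝ E] {x : E} {r : ℝ}

open Classical in
/-- The retraction of `E` onto the closed ball that folds the exterior inside by inversion in the
bounding sphere. -/
noncomputable def foldBall (x : E) (r : ℝ) (y : E) : E :=
  if y ∈ ball x r then y else EuclideanGeometry.inversion x r y

lemma foldBall_of_mem {y : E} (hy : y ∈ ball x r) : foldBall x r y = y := if_pos hy

lemma foldBall_of_notMem {y : E} (hy : y ∉ ball x r) :
    foldBall x r y = EuclideanGeometry.inversion x r y := if_neg hy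

lemma inversion_mem_closedBall (hr : 0 < r) {y : E} (hy : y ∉ ball x r) :
    EuclideanGeometry.inversion x r y ∈ closedBall x r := by
  have hy : r ≤ dist y x := not_lt.1 hy
  rw [mem_closedBall, EuclideanGeometry.dist_inversion_center, div_le_iff₀ (hr.trans_le hy), sq]
  gcongr

lemma foldBall_mem_closedBall (hr : 0 < r) (y : E) : foldBall x r y ∈ closedBall x r := by
  by_cases hy : y ∈ ball x r
  · rw [foldBall_of_mem hy]
    exact ball_subset_closedBall hy
  · rw [foldBall_of_notMem hy]
    exact inversion_mem_closedBall hr hy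

lemma dist_inversion_inversion_le (hr : 0 < r) {y z : E} (hy : y ∉ ball x r) (hz : z ∉ ball x r) :
    dist (EuclideanGeometry.inversion x r y) (EuclideanGeometry.inversion x r z) ≤ dist y z := by
  have hy : r ≤ dist y x := not_lt.1 hy
  have hz : r ≤ dist z x := not_lt.1 hz
  rw [EuclideanGeometry.dist_inversion_inversion (dist_pos.1 (hr.trans_le hy))
    (dist_pos.1 (hr.trans_le hz))]
  refine mul_le_of_le_one_left dist_nonneg (div_le_one_of_le₀ ?_ (by positivity))
  rw [sq]
  gcongr

lemma dist_inversion_le_of_mem (hr : 0 < r) {y z : E} (hy : y ∈ ball x r) (hz : z ∉ ball x r) :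
    dist y (EuclideanGeometry.inversion x r z) ≤ dist y z := by
  set v := y - x
  set w := z - x
  set t := (r / dist z x) ^ 2
  have hv : ‖v‖ ≤ r := (mem_ball_iff_norm.1 hy).le
  have hw : r ≤ ‖w‖ := not_lt.1 (mt mem_ball_iff_norm.2 hz)
  have htw : t * ‖w‖ ^ 2 = r ^ 2 := by
    simp only [t, w, dist_eq_norm]
    rw [← mul_pow, div_mul_cancel₀ _ (hr.trans_le hw).ne']
  have ht : t ≤ 1 := by
    simp only [t, dist_eq_norm]
    exact pow_le_one₀ (by positivity) (div_le_one_of_le₀ hw (norm_nonneg _))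
  have hinner : 2 * inner ℝ v w ≤ (1 + t) * ‖w‖ ^ 2 := by
    have := real_inner_le_norm v w
    nlinarith [mul_le_mul_of_nonneg_right hv (norm_nonneg w), sq_nonneg (‖w‖ - r)]
  have hvw : y - z = v - w := by simp [v, w]
  have hvtw : y - EuclideanGeometry.inversion x r z = v - t • w := by
    simp [EuclideanGeometry.inversion, v, w, t, sub_sub, add_comm]
  rw [dist_eq_norm, dist_eq_norm, hvw, hvtw, ← sq_le_sq₀ (norm_nonneg _) (norm_nonneg _),
    norm_sub_sq_real v w, norm_sub_sq_real v (t • w), norm_smul, inner_smul_right, mul_pow,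
    Real.norm_eq_abs, sq_abs]
  nlinarith [mul_nonneg (sub_nonneg.2 ht) (sub_nonneg.2 hinner)]

lemma lipschitzWith_foldBall (hr : 0 < r) : LipschitzWith 1 (foldBall x r) := by
  refine .of_dist_le_mul fun y z => ?_
  rw [NNReal.coe_one, one_mul]
  by_cases hy : y ∈ ball x r <;> by_cases hz : z ∈ ball x r
  · rw [foldBall_of_mem hy, foldBall_of_mem hz]
  · rw [foldBall_of_mem hy, foldBall_of_notMem hz]
    exact dist_inversion_le_of_mem hr hy hz
  · rw [foldBall_of_notMem hy, foldBall_of_mem hz, dist_comm, dist_comm y]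
    exact dist_inversion_le_of_mem hr hz hy
  · rw [foldBall_of_notMem hy, foldBall_of_notMem hz]
    exact dist_inversion_inversion_le hr hy hz

variable [FiniteDimensional ℝ E]

lemma abs_det_smul_reflection (c : ℝ) (K : Submodule ℝ E) :
    |(c • (K.reflection : E →L[ℝ] E)).det| = |c| ^ Module.finrank ℝ E := by
  have hsmul : (c • (K.reflection : E →L[ℝ] E)).det =
      c ^ Module.finrank ℝ E * LinearMap.det K.reflection.toLinearMap :=
    LinearMap.det_smul c _
  rw [hsmul, K.det_reflection, abs_mul, abs_pow, abs_neg_one_pow, mul_one]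

variable [MeasurableSpace E] [BorelSpace E]
  (μ : Measure E) [μ.IsAddHaarMeasure]

lemma setLIntegral_comp_foldBall_le (hr : 0 < r) (G : E → ℝ≥0∞) :
    ∫⁻ y in ball x (2 * r), G (foldBall x r y) ∂μ ≤
      (1 + 4 ^ Module.finrank ℝ E) * ∫⁻ y in ball x r, G y ∂μ := by
  set A := ball x (2 * r) \ ball x r
  have hA : MeasurableSet A := measurableSet_ball.diff measurableSet_ball
  have hball : ball x (2 * r) = ball x r ∪ A :=
    (union_sdiff_cancel (ball_subset_ball (by linarith))).symm
  have hannulus : ∫⁻ y in A, G (EuclideanGeometry.inversion x r y) ∂μ ≤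
      4 ^ Module.finrank ℝ E * ∫⁻ y in closedBall x r, G y ∂μ := by
    have hpos : ∀ y ∈ A, 0 < dist y x := fun y hy => hr.trans_le (not_lt.1 hy.2)
    refine setLIntegral_comp_le_of_one_le_mul_abs_det μ (by finiteness) hA
      (fun y hy => EuclideanGeometry.hasFDerivAt_inversion (dist_pos.1 (hpos y hy)))
      (EuclideanGeometry.inversion_injective x hr.ne').injOn
      (fun y hy => inversion_mem_closedBall hr hy.2) (fun y hy => ?_) G
    have hhalf : 1 / 2 ≤ r / dist y x := by
      rw [div_le_div_iff₀ two_pos (hpos y hy)]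
      linarith [mem_ball.1 hy.1]
    rw [abs_det_smul_reflection, abs_of_nonneg (sq_nonneg _), ENNReal.ofReal_pow (sq_nonneg _),
      ← mul_pow]
    refine one_le_pow₀ ?_
    rw [← ENNReal.ofReal_ofNat, ← ENNReal.ofReal_mul four_pos.le, ENNReal.one_le_ofReal]
    nlinarith
  have hsphere : (ball x r : Set E) =ᵐ[μ] closedBall x r :=
    ae_eq_set.2 ⟨by rw [sdiff_eq_empty.2 ball_subset_closedBall, measure_empty], by
      rw [closedBall_sdiff_ball]
      exact Measure.addHaar_sphere_of_ne_zero μ x hr.ne'⟩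
  rw [← Measure.restrict_congr_set hsphere] at hannulus
  rw [hball, lintegral_union hA disjoint_sdiff_right, add_mul, one_mul]
  refine add_le_add (le_of_eq ?_) (hannulus.trans' (le_of_eq ?_))
  · exact setLIntegral_congr_fun measurableSet_ball fun y hy => by rw [foldBall_of_mem hy]
  · exact setLIntegral_congr_fun hA fun y hy => by rw [foldBall_of_notMem hy.2]

end Fold

/-- The extension of a function `w` on `ball x r` across the bounding sphere by inversion, cut off
so as to be supported in `closedBall x (2 * r)`. -/
noncomputable def ballExtension {E : Type*} [NormedAddCommGroup E] [InnerProductSpace ℝ E] (x : E)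
    (r : ℝ) (w : E → ℝ) (y : E) : ℝ :=
  ballCutoff x r y * w (foldBall x r y)

section BallExtension

variable {E : Type*} [NormedAddCommGroup E] [InnerProductSpace ℝ E] {x : E} {r : ℝ} {w : E → ℝ}

lemma ballExtension_of_mem {y : E} (hy : y ∈ ball x r) : ballExtension x r w y = w y := by
  rw [ballExtension, ballCutoff_eq_one hy, one_mul, foldBall_of_mem hy]

lemma ballExtension_of_notMem (hr : 0 < r) {y : E} (hy : y ∉ ball x (2 * r)) :
    ballExtension x r w y = 0 := by
  rw [ballExtension, ballCutoff_eq_zero hr hy, zero_mul]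

lemma fderiv_ballExtension (hw : Differentiable ℝ w) {y : E}
    (hcutoff : DifferentiableAt ℝ (ballCutoff x r) y)
    (hfold : DifferentiableAt ℝ (foldBall x r) y) :
    fderiv ℝ (ballExtension x r w) y =
      ballCutoff x r y • (fderiv ℝ w (foldBall x r y)).comp (fderiv ℝ (foldBall x r) y) +
        w (foldBall x r y) • fderiv ℝ (ballCutoff x r) y :=
  (hcutoff.hasFDerivAt.mul
    ((hw (foldBall x r y)).hasFDerivAt.comp y hfold.hasFDerivAt)).fderiv

lemma norm_fderiv_ballExtension_le (hr : 0 < r) (hw : Differentiable ℝ w) {y : E}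
    (hcutoff : DifferentiableAt ℝ (ballCutoff x r) y)
    (hfold : DifferentiableAt ℝ (foldBall x r) y) :
    ‖fderiv ℝ (ballExtension x r w) y‖ ≤
      ‖fderiv ℝ w (foldBall x r y)‖ + r⁻¹ * ‖w (foldBall x r y)‖ := by
  lift r to ℝ≥0 using hr.le
  calc ‖fderiv ℝ (ballExtension x r w) y‖
      ≤ ‖ballCutoff x r y‖ * (‖fderiv ℝ w (foldBall x r y)‖ * ‖fderiv ℝ (foldBall x r) y‖) +
          ‖w (foldBall x r y)‖ * ‖fderiv ℝ (ballCutoff x r) y‖ := by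
        rw [fderiv_ballExtension hw hcutoff hfold]
        refine (norm_add_le _ _).trans ?_
        rw [norm_smul, norm_smul]
        gcongr
        exact ContinuousLinearMap.opNorm_comp_le _ _
    _ ≤ 1 * (‖fderiv ℝ w (foldBall x r y)‖ * (1 : ℝ≥0)) +
          ‖w (foldBall x r y)‖ * (r⁻¹ : ℝ≥0) := by
        gcongr
        exacts [norm_ballCutoff_le_one y, norm_fderiv_le_of_lipschitz ℝ (lipschitzWith_foldBall hr),
          norm_fderiv_le_of_lipschitz ℝ (lipschitzWith_ballCutoff x r)]
    _ = _ := by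
        push_cast
        ring

lemma fderiv_ballExtension_of_notMem (hr : 0 < r) (hw : Differentiable ℝ w) {y : E}
    (hcutoff : DifferentiableAt ℝ (ballCutoff x r) y)
    (hfold : DifferentiableAt ℝ (foldBall x r) y) (hy : y ∉ ball x (2 * r)) :
    fderiv ℝ (ballExtension x r w) y = 0 := by
  have hzero : ballCutoff x r y = 0 := ballCutoff_eq_zero hr hy
  have hmin : IsLocalMin (ballCutoff x r) y :=
    Eventually.of_forall fun _ => hzero.trans_le (le_max_left _ _)
  rw [fderiv_ballExtension hw hcutoff hfold, hzero, hmin.fderiv_eq_zero]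
  simp

variable [FiniteDimensional ℝ E]

lemma hasCompactSupport_ballExtension (hr : 0 < r) : HasCompactSupport (ballExtension x r w) :=
  .intro (isCompact_closedBall x (2 * r)) fun _ hy =>
    ballExtension_of_notMem hr (mt (@ball_subset_closedBall _ _ x (2 * r) _) hy)

lemma exists_lipschitzWith_ballExtension (hr : 0 < r) {K : ℝ≥0} (hw : LipschitzWith K w) :
    ∃ L : ℝ≥0, LipschitzWith L (ballExtension x r w) := by
  lift r to ℝ≥0 using hr.le
  obtain ⟨M, hM⟩ := (isCompact_closedBall x (r : ℝ)).exists_bound_of_continuousOn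
    hw.continuous.continuousOn
  exact ⟨_, lipschitzWith_mul_of_norm_le (A := 1) (B := M.toNNReal) (lipschitzWith_ballCutoff x r)
    (hw.comp (lipschitzWith_foldBall hr)) (fun y => norm_ballCutoff_le_one y) fun y =>
      (hM _ (foldBall_mem_closedBall hr y)).trans (Real.le_coe_toNNReal M)⟩

variable [MeasurableSpace E] [BorelSpace E] (μ : Measure E) [μ.IsAddHaarMeasure] {p : ℝ}

lemma lintegral_enorm_fderiv_ballExtension_rpow_le (hr : 0 < r) (hw : Differentiable ℝ w)
    (hp : 1 ≤ p) :
    ∫⁻ y, ‖fderiv ℝ (ballExtension x r w) y‖ₑ ^ p ∂μ ≤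
      2 ^ (p - 1) * (1 + 4 ^ Module.finrank ℝ E) *
        ∫⁻ y in ball x r, (‖fderiv ℝ w y‖ₑ ^ p + (ENNReal.ofReal r⁻¹ * ‖w y‖ₑ) ^ p) ∂μ := by
  set G : E → ℝ≥0∞ := fun y => ‖fderiv ℝ w y‖ₑ ^ p + (ENNReal.ofReal r⁻¹ * ‖w y‖ₑ) ^ p
  have hbound : ∀ᵐ y ∂μ, ‖fderiv ℝ (ballExtension x r w) y‖ₑ ^ p ≤
      (ball x (2 * r)).indicator (fun y => 2 ^ (p - 1) * G (foldBall x r y)) y := by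
    have hcutoff := (lipschitzWith_ballCutoff x ⟨r, hr.le⟩).ae_differentiableAt (μ := μ)
    have hfold := (lipschitzWith_foldBall (x := x) hr).ae_differentiableAt (μ := μ)
    filter_upwards [hcutoff, hfold] with y hcutoff hfold
    by_cases hy : y ∈ ball x (2 * r)
    · rw [indicator_of_mem hy]
      refine (ENNReal.rpow_le_rpow ?_ (by linarith)).trans
        (ENNReal.rpow_add_le_mul_rpow_add_rpow _ _ hp)
      rw [← ofReal_norm, ← ofReal_norm, ← ofReal_norm, ← ENNReal.ofReal_mul (by positivity),
        ← ENNReal.ofReal_add (by positivity) (by positivity)]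
      exact ENNReal.ofReal_le_ofReal (norm_fderiv_ballExtension_le hr hw hcutoff hfold)
    · rw [fderiv_ballExtension_of_notMem hr hw hcutoff hfold hy, ← ofReal_norm, norm_zero,
        ENNReal.ofReal_zero, ENNReal.zero_rpow_of_pos (by linarith)]
      exact zero_le
  calc ∫⁻ y, ‖fderiv ℝ (ballExtension x r w) y‖ₑ ^ p ∂μ
      ≤ 2 ^ (p - 1) * ∫⁻ y in ball x (2 * r), G (foldBall x r y) ∂μ := by
        rw [← lintegral_const_mul' _ _ (by finiteness), ← lintegral_indicator measurableSet_ball]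
        exact lintegral_mono_ae hbound
    _ ≤ _ := by
        rw [mul_assoc]
        gcongr
        exact setLIntegral_comp_foldBall_le μ hr G

theorem lintegral_enorm_fderiv_ballExtension_average_sub_rpow_le {u : E → ℝ} (hr : 0 < r)
    (hu : ContDiff ℝ 1 u) (hp : 1 ≤ p) :
    ∫⁻ y, ‖fderiv ℝ (ballExtension x r fun z => (⨍ z in ball x r, u z ∂μ) - u z) y‖ₑ ^ p ∂μ ≤
      2 ^ (p - 1) * (1 + 4 ^ Module.finrank ℝ E) * (1 + 2 ^ p * 2 ^ Module.finrank ℝ E) *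
        ∫⁻ y in ball x r, ‖fderiv ℝ u y‖ₑ ^ p ∂μ := by
  set c := ⨍ z in ball x r, u z ∂μ
  have hp0 : 0 ≤ p := by linarith
  have hpoincare : ∫⁻ y in ball x r, (ENNReal.ofReal r⁻¹ * ‖c - u y‖ₑ) ^ p ∂μ ≤
      2 ^ p * 2 ^ Module.finrank ℝ E * ∫⁻ y in ball x r, ‖fderiv ℝ u y‖ₑ ^ p ∂μ := by
    have hscale : ENNReal.ofReal r⁻¹ ^ p * ENNReal.ofReal (2 * r) ^ p = 2 ^ p := by
      rw [← ENNReal.mul_rpow_of_nonneg _ _ hp0, ← ENNReal.ofReal_mul (by positivity),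
        show r⁻¹ * (2 * r) = 2 by field_simp, ENNReal.ofReal_ofNat]
    simp_rw [ENNReal.mul_rpow_of_nonneg _ _ hp0]
    rw [lintegral_const_mul' _ _ (by finiteness), ← hscale, mul_assoc (_ ^ p * _),
      mul_assoc (_ ^ p), ← mul_assoc (ENNReal.ofReal (2 * r) ^ p)]
    gcongr
    exact lintegral_enorm_sub_average_rpow_le μ hu hp hr
  have hmeas : Measurable fun y => ‖fderiv ℝ (fun z => c - u z) y‖ₑ ^ p :=
    (measurable_fderiv ℝ _).enorm.pow_const p
  refine (lintegral_enorm_fderiv_ballExtension_rpow_le μ hr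
    ((hu.differentiable one_ne_zero).const_sub c) hp).trans ?_
  rw [mul_assoc _ (1 + 2 ^ p * _), lintegral_add_left hmeas, add_mul 1 (2 ^ p * _), one_mul]
  simp only [fderiv_const_sub, enorm_neg]
  gcongr

end BallExtension

section SumMax

variable {E : Type*} [NormedAddCommGroup E] [NormedSpace ℝ E] {a b : E → ℝ} {x : E}

lemma fderiv_max_eq_left (ha : DifferentiableAt ℝ a x)
    (hmax : DifferentiableAt ℝ (fun y => max (a y) (b y)) x) (hx : b x ≤ a x) :
    fderiv ℝ (fun y => max (a y) (b y)) x = fderiv ℝ a x := by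
  have hmin : IsLocalMin (fun y => max (a y) (b y) - a y) x :=
    Eventually.of_forall fun y => by simp [max_eq_left hx]
  rw [← sub_eq_zero, ← fderiv_fun_sub hmax ha, hmin.fderiv_eq_zero]

lemma fderiv_max_eq_or (ha : DifferentiableAt ℝ a x) (hb : DifferentiableAt ℝ b x)
    (hmax : DifferentiableAt ℝ (fun y => max (a y) (b y)) x) :
    fderiv ℝ (fun y => max (a y) (b y)) x = fderiv ℝ a x ∨
      fderiv ℝ (fun y => max (a y) (b y)) x = fderiv ℝ b x := by
  rcases le_total (b x) (a x) with hx | hx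
  · exact .inl (fderiv_max_eq_left ha hmax hx)
  · simp only [max_comm (a _)] at hmax ⊢
    exact .inr (fderiv_max_eq_left hb hmax hx)

variable [FiniteDimensional ℝ E] [MeasurableSpace E] [BorelSpace E] (μ : Measure E)
  [μ.IsAddHaarMeasure]

lemma lintegral_enorm_fderiv_add_rpow_le {Ka Kb : ℝ≥0} (ha : LipschitzWith Ka a)
    (hb : LipschitzWith Kb b) {p : ℝ} (hp : 1 ≤ p) :
    ∫⁻ x, ‖fderiv ℝ (fun y => a y + b y) x‖ₑ ^ p ∂μ ≤
      2 ^ (p - 1) * (∫⁻ x, ‖fderiv ℝ a x‖ₑ ^ p ∂μ + ∫⁻ x, ‖fderiv ℝ b x‖ₑ ^ p ∂μ) := by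
  have ha' : Measurable fun x => ‖fderiv ℝ a x‖ₑ ^ p :=
    (measurable_fderiv ℝ a).enorm.pow_const p
  rw [← lintegral_add_left ha', ← lintegral_const_mul' _ _ (by finiteness)]
  refine lintegral_mono_ae ?_
  filter_upwards [ha.ae_differentiableAt, hb.ae_differentiableAt] with x hax hbx
  rw [fderiv_fun_add hax hbx]
  calc ‖fderiv ℝ a x + fderiv ℝ b x‖ₑ ^ p ≤ (‖fderiv ℝ a x‖ₑ + ‖fderiv ℝ b x‖ₑ) ^ p := by
        gcongr
        exact enorm_add_le (fderiv ℝ a x) (fderiv ℝ b x)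
    _ ≤ _ := ENNReal.rpow_add_le_mul_rpow_add_rpow _ _ hp

lemma lintegral_enorm_fderiv_max_rpow_le {Ka Kb : ℝ≥0} (ha : LipschitzWith Ka a)
    (hb : LipschitzWith Kb b) (p : ℝ) :
    ∫⁻ x, ‖fderiv ℝ (fun y => max (a y) (b y)) x‖ₑ ^ p ∂μ ≤
      ∫⁻ x, ‖fderiv ℝ a x‖ₑ ^ p ∂μ + ∫⁻ x, ‖fderiv ℝ b x‖ₑ ^ p ∂μ := by
  rw [← lintegral_add_left ((measurable_fderiv ℝ a).enorm.pow_const p)]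
  refine lintegral_mono_ae ?_
  filter_upwards [ha.ae_differentiableAt, hb.ae_differentiableAt,
    (ha.max hb).ae_differentiableAt] with x ha hb hmax
  rcases fderiv_max_eq_or ha hb hmax with h | h <;> rw [h]
  exacts [le_self_add, le_add_self]

lemma exists_lipschitz_majorant {ι : Type*} (T : Finset ι) {e : ι → E → ℝ}
    (he : ∀ i ∈ T, ∃ K, LipschitzWith K (e i)) (hsupp : ∀ i ∈ T, HasCompactSupport (e i))
    {p : ℝ} (hp : 0 < p) :
    ∃ H : E → ℝ, (∃ K, LipschitzWith K H) ∧ HasCompactSupport H ∧ (∀ i ∈ T, e i ≤ H) ∧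
      ∫⁻ x, ‖fderiv ℝ H x‖ₑ ^ p ∂μ ≤ ∑ i ∈ T, ∫⁻ x, ‖fderiv ℝ (e i) x‖ₑ ^ p ∂μ := by
  classical
  induction T using Finset.induction_on with
  | empty =>
    refine ⟨0, ⟨0, .const 0⟩, .zero, by simp, ?_⟩
    simp [← ofReal_norm, hp]
  | insert i T hi ih =>
    simp only [Finset.forall_mem_insert] at he hsupp ⊢
    obtain ⟨H, ⟨K, hK⟩, hHsupp, hHe, hHint⟩ := ih he.2 hsupp.2
    obtain ⟨⟨L, hL⟩, -⟩ := he
    refine ⟨fun y => max (e i y) (H y), ⟨_, hL.max hK⟩, hsupp.1.comp₂_left hHsupp (max_self 0),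
      ⟨fun y => le_max_left _ _, fun j hj y => le_max_of_le_right (hHe j hj y)⟩, ?_⟩
    rw [Finset.sum_insert hi]
    exact (lintegral_enorm_fderiv_max_rpow_le μ hL hK p).trans (by gcongr)

end SumMax

lemma sum_setLIntegral_le_nat_mul {ι X : Type*} [MeasurableSpace X] {N : ℕ} {s : Fin N → Set ι}
    {B : ι → Set X} (hB : ∀ x, MeasurableSet (B x)) (hs : ∀ i, (s i).PairwiseDisjoint B)
    {T : Finset ι} (hT : ↑T ⊆ ⋃ i, s i) (μ : Measure X) (G : X → ℝ≥0∞) :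
    ∑ x ∈ T, ∫⁻ y in B x, G y ∂μ ≤ N * ∫⁻ y, G y ∂μ := by
  classical
  have hfamily (i : Fin N) : ∑ x ∈ T with x ∈ s i, ∫⁻ y in B x, G y ∂μ ≤ ∫⁻ y, G y ∂μ := by
    rw [← lintegral_biUnion_finset ((hs i).subset fun x hx => (Finset.mem_filter.1 hx).2)
      fun x _ => hB x]
    exact setLIntegral_le_lintegral _ _
  have hmem (x) (hx : x ∈ T) : ∫⁻ y in B x, G y ∂μ ≤
      ∑ i, if x ∈ s i then ∫⁻ y in B x, G y ∂μ else 0 := by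
    obtain ⟨i, hi⟩ := mem_iUnion.1 (hT hx)
    calc ∫⁻ y in B x, G y ∂μ = if x ∈ s i then ∫⁻ y in B x, G y ∂μ else 0 := (if_pos hi).symm
      _ ≤ _ := Finset.single_le_sum_of_canonicallyOrdered
        (f := fun i => if x ∈ s i then ∫⁻ y in B x, G y ∂μ else 0) (Finset.mem_univ i)
  calc ∑ x ∈ T, ∫⁻ y in B x, G y ∂μ
      ≤ ∑ x ∈ T, ∑ i, if x ∈ s i then ∫⁻ y in B x, G y ∂μ else 0 := Finset.sum_le_sum hmem
    _ = ∑ i, ∑ x ∈ T with x ∈ s i, ∫⁻ y in B x, G y ∂μ := by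
        rw [Finset.sum_comm]
        simp only [Finset.sum_filter]
    _ ≤ ∑ _i : Fin N, ∫⁻ y, G y ∂μ := Finset.sum_le_sum fun i _ => hfamily i
    _ = N * ∫⁻ y, G y ∂μ := by simp

lemma exists_finset_ball_cover_lintegral_le (E : Type*) [MetricSpace E]
    [HasBesicovitchCovering E] [MeasurableSpace E] [OpensMeasurableSpace E] :
    ∃ N : ℕ, ∀ (F : Set E) (r : E → ℝ) (R : ℝ), IsCompact F → (∀ x ∈ F, 0 < r x) →
      (∀ x ∈ F, r x ≤ R) → ∃ T : Finset E, ↑T ⊆ F ∧ F ⊆ ⋃ x ∈ T, ball x (r x) ∧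
        ∀ (μ : Measure E) (G : E → ℝ≥0∞),
          ∑ x ∈ T, ∫⁻ y in ball x (r x), G y ∂μ ≤ N * ∫⁻ y, G y ∂μ := by
  obtain ⟨N, τ, hτ, hN⟩ := HasBesicovitchCovering.no_satelliteConfig (α := E)
  refine ⟨N, fun F r R hF hr hR => ?_⟩
  let balls : Besicovitch.BallPackage F E :=
    { c := (↑), r := fun x => r x, rpos := fun x => hr x x.2
      r_bound := R, r_le := fun x => hR x x.2 }
  obtain ⟨s, hdisj, hcover⟩ := Besicovitch.exist_disjoint_covering_families hτ hN balls
  have hcover : F ⊆ ⋃ x ∈ ⋃ i, (↑) '' s i, ball x (r x) := by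
    simpa only [balls, biUnion_iUnion, biUnion_image, Subtype.range_coe] using hcover
  have hdisj (i) : ((↑) '' s i : Set E).PairwiseDisjoint fun x => ball x (r x) := by
    rw [Subtype.val_injective.injOn.pairwiseDisjoint_image]
    exact (hdisj i).mono fun x => ball_subset_closedBall
  obtain ⟨T, hT, hTfin, hFT⟩ := hF.elim_finite_subcover_image (fun _ _ => isOpen_ball) hcover
  lift T to Finset E using hTfin
  refine ⟨T, hT.trans (iUnion_subset fun i => Subtype.coe_image_subset F (s i)), by simpa using hFT,
    sum_setLIntegral_le_nat_mul (fun _ => measurableSet_ball) hdisj hT⟩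

lemma lintegral_enorm_rpow_ne_top_of_memLp {X F : Type*} [MeasurableSpace X] {μ : Measure X}
    [NormedAddCommGroup F] {f : X → F} {p : ℝ} (hf : MemLp f (.ofReal p) μ) (hp : 0 < p) :
    ∫⁻ x, ‖f x‖ₑ ^ p ∂μ ≠ ∞ := by
  simpa [ENNReal.toReal_ofReal hp.le] using
    (lintegral_rpow_enorm_lt_top_of_eLpNorm_lt_top (by simpa using hp) ENNReal.ofReal_ne_top
      hf.2).ne

lemma tendsto_setLIntegral_ball_cocompact {E : Type*} [NormedAddCommGroup E]
    [NormedSpace ℝ E] [FiniteDimensional ℝ E] [MeasurableSpace E] [BorelSpace E] {μ : Measure E}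
    {G : E → ℝ≥0∞} (hG : ∫⁻ y, G y ∂μ ≠ ∞) (R : ℝ) :
    Tendsto (fun x => ∫⁻ y in ball x R, G y ∂μ) (cocompact E) (𝓝 0) := by
  have : IsFiniteMeasure (μ.withDensity G) := isFiniteMeasure_withDensity hG
  refine ENNReal.tendsto_nhds_zero.2 fun ε hε => ?_
  obtain ⟨K, hK, hKε⟩ :=
    isTightMeasureSet_iff_exists_isCompact_measure_compl_le.1
      (isTightMeasureSet_singleton (μ := μ.withDensity G)) ε hε
  filter_upwards [(hK.cthickening (r := R)).compl_mem_cocompact] with x hx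
  rw [← withDensity_apply _ measurableSet_ball]
  refine (measure_mono (show ball x R ⊆ Kᶜ from fun y hy hyK => hx ?_)).trans (hKε _ rfl)
  exact mem_cthickening_of_dist_le x y R K hyK (mem_ball'.1 hy).le

section Mollification

variable {E F : Type*} [NormedAddCommGroup E] [NormedSpace ℝ E] [HasContDiffBump E]
  [MeasurableSpace E] [NormedAddCommGroup F] [NormedSpace ℝ F]

/-- The probability measure whose density with respect to `μ` is the normalized bump function `φ`;
integrating translates against it is mollification by `φ`. -/
noncomputable def bumpMeasure (φ : ContDiffBump (0 : E)) (μ : Measure E) : Measure E :=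
  μ.withDensity fun t => ENNReal.ofReal (φ.normed μ t)

/-- The mollification `φ ⋆ f`, as an average of translates of `f`. With an integral against a
probability measure as the definition, Jensen's inequality and Fubini's theorem apply directly. -/
noncomputable def mollify (φ : ContDiffBump (0 : E)) (μ : Measure E) (f : E → F) (x : E) : F :=
  ∫ t, f (x - t) ∂bumpMeasure φ μ

variable [BorelSpace E] {μ : Measure E} {φ : ContDiffBump (0 : E)} {f : E → F} {p : ℝ}

lemma measurable_ofReal_normed : Measurable fun t => ENNReal.ofReal (φ.normed μ t) :=
  φ.continuous_normed.measurable.ennreal_ofReal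

lemma mollify_eq_convolution :
    mollify φ μ f = convolution (φ.normed μ) f (ContinuousLinearMap.lsmul ℝ ℝ) μ := by
  ext x
  rw [mollify, bumpMeasure, integral_withDensity_eq_integral_toReal_smul measurable_ofReal_normed
    (.of_forall fun _ => ENNReal.ofReal_lt_top), convolution_def]
  simp [ENNReal.toReal_ofReal (φ.nonneg_normed _)]

variable [FiniteDimensional ℝ E] [μ.IsAddHaarMeasure]

instance isProbabilityMeasure_bumpMeasure : IsProbabilityMeasure (bumpMeasure φ μ) := by
  constructor
  rw [bumpMeasure, withDensity_apply _ .univ, Measure.restrict_univ,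
    ← ofReal_integral_eq_lintegral_ofReal φ.integrable_normed (.of_forall φ.nonneg_normed),
    φ.integral_normed, ENNReal.ofReal_one]

lemma ae_bumpMeasure_mem_ball : ∀ᵐ t ∂bumpMeasure φ μ, t ∈ ball 0 φ.rOut := by
  rw [bumpMeasure, ae_withDensity_iff measurable_ofReal_normed]
  refine .of_forall fun t ht => ?_
  rw [← φ.support_normed_eq (μ := μ)]
  exact fun h => ht (by simp [h])

lemma lintegral_bumpMeasure_le (G : E → ℝ≥0∞) :
    ∫⁻ t, G t ∂bumpMeasure φ μ ≤
      ENNReal.ofReal (1 / μ.real (closedBall 0 φ.rIn)) * ∫⁻ t in ball 0 φ.rOut, G t ∂μ := by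
  rw [← Measure.restrict_eq_self_of_ae_mem (ae_bumpMeasure_mem_ball (φ := φ) (μ := μ)), bumpMeasure,
    restrict_withDensity measurableSet_ball, ← lintegral_const_mul' _ _ ENNReal.ofReal_ne_top]
  refine (lintegral_withDensity_le_lintegral_mul _ measurable_ofReal_normed G).trans
    (lintegral_mono fun t => ?_)
  simp only [Pi.mul_apply]
  gcongr
  exact φ.normed_le_div_measure_closedBall_rIn μ t

lemma contDiff_mollify (hf : LocallyIntegrable f μ) {n : ℕ∞} :
    ContDiff ℝ n (mollify φ μ f) := by
  rw [mollify_eq_convolution]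
  exact φ.hasCompactSupport_normed.contDiff_convolution_left _ φ.contDiff_normed hf

lemma hasCompactSupport_mollify (hf : HasCompactSupport f) :
    HasCompactSupport (mollify φ μ f) := by
  rw [mollify_eq_convolution]
  exact φ.hasCompactSupport_normed.convolution _ hf

lemma integrable_comp_sub_bumpMeasure (hf : LocallyIntegrable f μ) (x : E) :
    Integrable (fun t => f (x - t)) (bumpMeasure φ μ) := by
  rw [bumpMeasure, integrable_withDensity_iff_integrable_smul' measurable_ofReal_normed
    (.of_forall fun _ => ENNReal.ofReal_lt_top)]
  simpa [ConvolutionExistsAt, ENNReal.toReal_ofReal (φ.nonneg_normed _)] using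
    φ.hasCompactSupport_normed.convolutionExists_left (ContinuousLinearMap.lsmul ℝ ℝ)
      φ.continuous_normed hf x

lemma le_mollify {u : E → ℝ} {x : E} {c : ℝ} (hu : LocallyIntegrable u μ)
    (hc : ∀ y ∈ ball x φ.rOut, c ≤ u y) : c ≤ mollify φ μ u x :=
  calc c = ∫ _, c ∂bumpMeasure φ μ := by simp
    _ ≤ mollify φ μ u x := by
      refine integral_mono_ae (integrable_const c) (integrable_comp_sub_bumpMeasure hu x) ?_
      filter_upwards [ae_bumpMeasure_mem_ball] with t ht
      exact hc _ (by simpa using ht)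

lemma enorm_mollify_rpow_le_lintegral (hf : AEStronglyMeasurable f μ) (hp : 1 ≤ p) (x : E) :
    ‖mollify φ μ f x‖ₑ ^ p ≤ ∫⁻ t, ‖f (x - t)‖ₑ ^ p ∂bumpMeasure φ μ :=
  enorm_integral_rpow_le_lintegral_enorm_rpow
    ((hf.comp_quasiMeasurePreserving (quasiMeasurePreserving_sub_left μ x)).mono_ac
      (withDensity_absolutelyContinuous _ _)) hp

lemma enorm_mollify_rpow_le_setLIntegral (hf : AEStronglyMeasurable f μ) (hp : 1 ≤ p) (x : E) :
    ‖mollify φ μ f x‖ₑ ^ p ≤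
      ENNReal.ofReal (1 / μ.real (closedBall 0 φ.rIn)) *
        ∫⁻ y in ball x φ.rOut, ‖f y‖ₑ ^ p ∂μ := by
  have htranslate : ∫⁻ t in ball 0 φ.rOut, ‖f (x - t)‖ₑ ^ p ∂μ =
      ∫⁻ y in ball x φ.rOut, ‖f y‖ₑ ^ p ∂μ := by
    have h := (μ.measurePreserving_sub_left x).setLIntegral_comp_preimage_emb
      (Homeomorph.subLeft x).measurableEmbedding (fun y => ‖f y‖ₑ ^ p) (ball x φ.rOut)
    rw [← h]
    congr 2
    ext t
    simp
  rw [← htranslate]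
  exact (enorm_mollify_rpow_le_lintegral hf hp x).trans (lintegral_bumpMeasure_le _)

lemma lintegral_enorm_mollify_rpow_le (hf : AEStronglyMeasurable f μ) (hp : 1 ≤ p) :
    ∫⁻ x, ‖mollify φ μ f x‖ₑ ^ p ∂μ ≤ ∫⁻ x, ‖f x‖ₑ ^ p ∂μ := by
  have hmeas : AEMeasurable (fun z : E × E => ‖f (z.1 - z.2)‖ₑ ^ p)
      (μ.prod (bumpMeasure φ μ)) :=
    ((hf.comp_quasiMeasurePreserving (quasiMeasurePreserving_sub μ _)).mono_ac
      ((Measure.AbsolutelyContinuous.refl μ).prod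
        (withDensity_absolutelyContinuous _ _))).enorm.pow_const p
  calc ∫⁻ x, ‖mollify φ μ f x‖ₑ ^ p ∂μ
      ≤ ∫⁻ x, ∫⁻ t, ‖f (x - t)‖ₑ ^ p ∂bumpMeasure φ μ ∂μ :=
        lintegral_mono fun x => enorm_mollify_rpow_le_lintegral hf hp x
    _ = ∫⁻ t, ∫⁻ x, ‖f (x - t)‖ₑ ^ p ∂μ ∂bumpMeasure φ μ := lintegral_lintegral_swap hmeas
    _ = ∫⁻ x, ‖f x‖ₑ ^ p ∂μ := by
        simp [lintegral_sub_right_eq_self (fun x => ‖f x‖ₑ ^ p)]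

lemma exists_nnnorm_mollify_le (hf : MemLp f (.ofReal p) μ) (hp : 1 ≤ p) :
    ∃ M : ℝ≥0, ∀ x, ‖mollify φ μ f x‖₊ ≤ M := by
  have hp0 : 0 < p := by linarith
  have hfp := lintegral_enorm_rpow_ne_top_of_memLp hf hp0
  set c := ENNReal.ofReal (1 / μ.real (closedBall 0 φ.rIn))
  refine ⟨((c * ∫⁻ x, ‖f x‖ₑ ^ p ∂μ) ^ p⁻¹).toNNReal, fun x => ?_⟩
  rw [← ENNReal.coe_le_coe, ENNReal.coe_toNNReal (by finiteness), ← enorm_eq_nnnorm,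
    ENNReal.le_rpow_inv_iff hp0]
  exact (enorm_mollify_rpow_le_setLIntegral hf.1 hp x).trans
    (by gcongr; exact Measure.restrict_le_self)

lemma tendsto_mollify_cocompact (hf : MemLp f (.ofReal p) μ) (hp : 1 ≤ p) :
    Tendsto (mollify φ μ f) (cocompact E) (𝓝 0) := by
  have hp0 : 0 < p := by linarith
  have hfp := lintegral_enorm_rpow_ne_top_of_memLp hf hp0
  have hpow : Tendsto (fun x => ‖mollify φ μ f x‖ₑ ^ p) (cocompact E) (𝓝 0) := by
    refine tendsto_of_tendsto_of_tendsto_of_le_of_le tendsto_const_nhds ?_ (fun _ => zero_le)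
      (enorm_mollify_rpow_le_setLIntegral hf.1 hp)
    simpa using ENNReal.Tendsto.const_mul (tendsto_setLIntegral_ball_cocompact hfp φ.rOut)
      (.inr ENNReal.ofReal_ne_top)
  rw [tendsto_zero_iff_enorm_tendsto_zero]
  simpa [← ENNReal.rpow_mul, hp0.ne', hp0] using hpow.ennrpow_const p⁻¹

end Mollification

lemma continuousAt_indicator_ball {E F : Type*} [PseudoMetricSpace E] [TopologicalSpace F]
    [Zero F] (f : E → F) {x y : E} {ρ : ℝ} (hy : y ∉ sphere x ρ) :
    ContinuousAt (fun z => (ball z ρ).indicator f y) x := by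
  have hdist : ContinuousAt (dist y) x := by fun_prop
  rcases lt_or_gt_of_ne hy with hlt | hgt
  · refine (continuousAt_const (y := f y)).congr ?_
    filter_upwards [hdist.eventually_lt continuousAt_const hlt] with z hz
    exact (indicator_of_mem (mem_ball.2 hz) f).symm
  · refine (continuousAt_const (y := 0)).congr ?_
    filter_upwards [continuousAt_const.eventually_lt hdist hgt] with z hz
    exact (indicator_of_notMem (mt mem_ball.1 hz.le.not_gt) f).symm

lemma setAverage_ball {E F : Type*} [NormedAddCommGroup E] [MeasurableSpace E] [BorelSpace E]
    [NormedAddCommGroup F] [NormedSpace ℝ F] (μ : Measure E) [μ.IsAddHaarMeasure] (f : E → F)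
    (x : E) (ρ : ℝ) :
    ⨍ y in ball x ρ, f y ∂μ = (μ.real (ball 0 ρ))⁻¹ • ∫ y in ball x ρ, f y ∂μ := by
  rw [setAverage_eq, μ.addHaar_real_ball_center]

section BallAverage

variable {E F : Type*} [NormedAddCommGroup E] [NormedSpace ℝ E] [FiniteDimensional ℝ E]
  [MeasurableSpace E] [BorelSpace E] [NormedAddCommGroup F] [NormedSpace ℝ F]
  {μ : Measure E} [μ.IsAddHaarMeasure] {f : E → F} {ρ : ℝ}

lemma continuous_setIntegral_ball (hf : LocallyIntegrable f μ) (hρ : ρ ≠ 0) :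
    Continuous fun x => ∫ y in ball x ρ, f y ∂μ := by
  simp only [← integral_indicator measurableSet_ball]
  refine continuous_iff_continuousAt.2 fun x => ?_
  refine continuousAt_of_dominated (bound := (ball x (ρ + 1)).indicator fun y => ‖f y‖)
    (.of_forall fun z => hf.aestronglyMeasurable.indicator measurableSet_ball) ?_ ?_ ?_
  · filter_upwards [ball_mem_nhds x one_pos] with z hz
    refine .of_forall fun y => ?_
    rw [norm_indicator_eq_indicator_norm]
    refine indicator_le_indicator_of_subset (ball_subset_ball' ?_) (fun _ => norm_nonneg _) y
    linarith [mem_ball.1 hz]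
  · refine IntegrableOn.integrable_indicator ?_ measurableSet_ball
    exact ((hf.integrableOn_isCompact (isCompact_closedBall x (ρ + 1))).mono_set
      ball_subset_closedBall).norm
  · have hsphere : ∀ᵐ y ∂μ, y ∉ sphere x ρ :=
      measure_eq_zero_iff_ae_notMem.1 (μ.addHaar_sphere_of_ne_zero x hρ)
    filter_upwards [hsphere] with y hy using continuousAt_indicator_ball f hy

lemma continuous_setAverage_ball (hf : LocallyIntegrable f μ) (hρ : ρ ≠ 0) :
    Continuous fun x => ⨍ y in ball x ρ, f y ∂μ := by
  simp only [setAverage_ball]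
  exact (continuous_setIntegral_ball hf hρ).const_smul _

variable {φ : ContDiffBump (0 : E)}

lemma integrable_comp_sub_restrict_ball_prod (hf : LocallyIntegrable f μ) (x : E) :
    Integrable (fun z : E × E => f (z.1 - z.2))
      ((μ.restrict (ball x ρ)).prod (bumpMeasure φ μ)) := by
  set B := ball x (ρ + φ.rOut)
  have hB : Integrable (B.indicator f) μ :=
    ((hf.integrableOn_isCompact (isCompact_closedBall x _)).mono_set
      ball_subset_closedBall).integrable_indicator measurableSet_ball
  have hint : Integrable (fun z : E × E => B.indicator f (z.1 - z.2))
      (μ.prod (bumpMeasure φ μ)) := by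
    simpa using (integrable_const (1 : ℝ)).convolution_integrand (ContinuousLinearMap.lsmul ℝ ℝ) hB
  rw [← Measure.restrict_eq_self_of_ae_mem (ae_bumpMeasure_mem_ball (φ := φ) (μ := μ)),
    Measure.prod_restrict]
  refine hint.integrableOn.congr_fun (fun z hz => indicator_of_mem ?_ f)
    (measurableSet_ball.prod measurableSet_ball)
  calc dist (z.1 - z.2) x ≤ dist (z.1 - z.2) z.1 + dist z.1 x := dist_triangle _ _ _
    _ = dist z.1 x + dist z.2 0 := by simp [add_comm]
    _ < ρ + φ.rOut := add_lt_add hz.1 hz.2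

lemma setIntegral_ball_mollify (hf : LocallyIntegrable f μ) (x : E) :
    ∫ y in ball x ρ, mollify φ μ f y ∂μ = mollify φ μ (fun y => ∫ z in ball y ρ, f z ∂μ) x := by
  have htranslate (t : E) : ∫ y in ball x ρ, f (y - t) ∂μ = ∫ z in ball (x - t) ρ, f z ∂μ := by
    rw [← (measurePreserving_sub_right μ t).setIntegral_preimage_emb
      (Homeomorph.subRight t).measurableEmbedding f (ball (x - t) ρ)]
    congr 2
    ext y
    simp
  simp only [mollify]
  rw [integral_integral_swap (integrable_comp_sub_restrict_ball_prod hf x)]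
  simp only [htranslate]

lemma setAverage_ball_mollify (hf : LocallyIntegrable f μ) (x : E) :
    ⨍ y in ball x ρ, mollify φ μ f y ∂μ = mollify φ μ (fun y => ⨍ z in ball y ρ, f z ∂μ) x := by
  simp only [setAverage_ball]
  rw [setIntegral_ball_mollify hf]
  exact (integral_smul _ _).symm

lemma le_setAverage_ball_mollify {u : E → ℝ} {x : E} {c : ℝ} (hu : LocallyIntegrable u μ)
    (hρ : ρ ≠ 0) (hc : ∀ y ∈ ball x φ.rOut, c ≤ ⨍ z in ball y ρ, u z ∂μ) :
    c ≤ ⨍ y in ball x ρ, mollify φ μ u y ∂μ := by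
  rw [setAverage_ball_mollify hu]
  exact le_mollify (continuous_setAverage_ball hu hρ).locallyIntegrable hc

end BallAverage

section WeakDerivative

variable {E : Type*} [NormedAddCommGroup E] [NormedSpace ℝ E] [MeasurableSpace E]

/-- `f'` is the weak Fréchet derivative of `f` with respect to `μ`: integration by parts against
smooth compactly supported functions holds in every direction. -/
def HasWeakFDeriv (f : E → ℝ) (f' : E → E →L[ℝ] ℝ) (μ : Measure E) : Prop :=
  ∀ η : E → ℝ, ContDiff ℝ (⊤ : ℕ∞) η → HasCompactSupport η →
    ∀ v, ∫ x, f x * fderiv ℝ η x v ∂μ = -∫ x, f' x v * η x ∂μ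

variable [BorelSpace E] [FiniteDimensional ℝ E] {μ : Measure E} [μ.IsAddHaarMeasure]

lemma hasWeakFDeriv_of_lipschitzWith {K : ℝ≥0} {f : E → ℝ} (hf : LipschitzWith K f) :
    HasWeakFDeriv f (fderiv ℝ f) μ := by
  intro η hη hηsupp v
  obtain ⟨D, hD⟩ := hη.lipschitzWith_of_hasCompactSupport hηsupp (by simp)
  have hf' : ∀ᵐ x ∂μ, fderiv ℝ f x v * η x = lineDeriv ℝ f x v * η x := by
    filter_upwards [hf.ae_differentiableAt] with x hx
    rw [hx.lineDeriv_eq_fderiv]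
  have hη' (x) : lineDeriv ℝ η x (-v) = -fderiv ℝ η x v := by
    rw [(hη.differentiable (by simp) x).lineDeriv_eq_fderiv, map_neg]
  rw [integral_congr_ae hf', hf.integral_lineDeriv_mul_eq hD hηsupp]
  simp only [hη', neg_mul, integral_neg, neg_neg, mul_comm (f _)]

lemma HasWeakFDeriv.fderiv_mollify {f : E → ℝ} {f' : E → E →L[ℝ] ℝ} {φ : ContDiffBump (0 : E)}
    (h : HasWeakFDeriv f f' μ) (hf : LocallyIntegrable f μ) (hf' : LocallyIntegrable f' μ) :
    fderiv ℝ (mollify φ μ f) = mollify φ μ f' := by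
  ext x v
  have hη : ContDiff ℝ (⊤ : ℕ∞) fun t => φ.normed μ (x - t) :=
    φ.contDiff_normed.comp (contDiff_const.sub contDiff_id)
  have hηsupp : HasCompactSupport fun t => φ.normed μ (x - t) :=
    φ.hasCompactSupport_normed.comp_homeomorph (Homeomorph.subLeft x)
  have hη' (t : E) : fderiv ℝ (fun t => φ.normed μ (x - t)) t =
      -fderiv ℝ (φ.normed μ) (x - t) := by
    simpa [← sub_eq_add_neg, fderiv_comp_add_left] using
      fderiv_comp_smul (𝕜 := ℝ) (f := fun z => φ.normed μ (x + z)) (x := t) (-1)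
  calc fderiv ℝ (mollify φ μ f) x v
      = ∫ t, f t * fderiv ℝ (φ.normed μ) (x - t) v ∂μ := by
        rw [mollify_eq_convolution, ← convolution_flip,
          (φ.hasCompactSupport_normed.hasFDerivAt_convolution_right _ hf
            φ.contDiff_normed x).fderiv,
          convolution_precompR_apply _ hf (φ.hasCompactSupport_normed.fderiv ℝ)
            (φ.contDiff_normed.continuous_fderiv one_ne_zero), convolution_def]
        simp [mul_comm]
    _ = -∫ t, f t * fderiv ℝ (fun t => φ.normed μ (x - t)) t v ∂μ := by
        simp [hη', integral_neg]
    _ = ∫ t, f' t v * φ.normed μ (x - t) ∂μ := by rw [h _ hη hηsupp, neg_neg]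
    _ = mollify φ μ (fun y => f' y v) x := by
        rw [mollify_eq_convolution, convolution_eq_swap]
        simp [mul_comm]
    _ = mollify φ μ f' x v :=
        (ContinuousLinearMap.integral_apply (integrable_comp_sub_bumpMeasure hf' x) v).symm

end WeakDerivative

lemma exists_contDiffBump_forall_ball_subset {E : Type*} [NormedAddCommGroup E] {F U : Set E}
    (hF : IsCompact F) (hU : IsOpen U) (hFU : F ⊆ U) :
    ∃ φ : ContDiffBump (0 : E), ∀ x ∈ F, ball x φ.rOut ⊆ U := by
  obtain ⟨δ, hδ, hsub⟩ := hF.exists_thickening_subset_open hU hFU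
  exact ⟨⟨δ / 2, δ, half_pos hδ, half_lt_self hδ⟩, fun x hx =>
    (ball_subset_thickening hx δ).trans hsub⟩

section SmoothCompetitor

variable {E : Type*} [NormedAddCommGroup E] [NormedSpace ℝ E] [FiniteDimensional ℝ E]
  [MeasurableSpace E] [BorelSpace E] {μ : Measure E} [μ.IsAddHaarMeasure] {p : ℝ}

lemma locallyIntegrable_fderiv_of_lipschitzWith {K : ℝ≥0} {h : E → ℝ} (hh : LipschitzWith K h) :
    LocallyIntegrable (fderiv ℝ h) μ :=
  (memLp_top_of_bound (measurable_fderiv ℝ h).aestronglyMeasurable K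
    (.of_forall fun _ => norm_fderiv_le_of_lipschitz ℝ hh)).locallyIntegrable le_top

lemma exists_contDiff_one_le_lintegral_fderiv_le {K : ℝ≥0} {h : E → ℝ} (hh : LipschitzWith K h)
    (hsupp : HasCompactSupport h) {F : Set E} (hF : IsCompact F) (hFh : ∀ x ∈ F, 1 < h x)
    (hp : 1 ≤ p) :
    ∃ v : E → ℝ, ContDiff ℝ (⊤ : ℕ∞) v ∧ HasCompactSupport v ∧ (∀ x ∈ F, 1 ≤ v x) ∧
      ∫⁻ x, ‖fderiv ℝ v x‖ₑ ^ p ∂μ ≤ ∫⁻ x, ‖fderiv ℝ h x‖ₑ ^ p ∂μ := by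
  obtain ⟨φ, hφ⟩ := exists_contDiffBump_forall_ball_subset hF
    (isOpen_lt continuous_const hh.continuous) hFh
  have hint : LocallyIntegrable h μ := hh.continuous.locallyIntegrable
  refine ⟨mollify φ μ h, contDiff_mollify hint, hasCompactSupport_mollify hsupp,
    fun x hx => le_mollify hint fun y hy => (hφ x hx hy).le, ?_⟩
  rw [(hasWeakFDeriv_of_lipschitzWith hh).fderiv_mollify hint
    (locallyIntegrable_fderiv_of_lipschitzWith hh)]
  exact lintegral_enorm_mollify_rpow_le (measurable_fderiv ℝ h).aestronglyMeasurable hp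

lemma exists_lipschitz_one_lt_lintegral_fderiv_le (μ : Measure E) [μ.IsAddHaarMeasure] {K : ℝ≥0}
    {v : E → ℝ} (hv : LipschitzWith K v) (hlim : Tendsto v (cocompact E) (𝓝 0)) {α : ℝ}
    (hα : 0 < α) (hp : 0 < p) :
    ∃ h : E → ℝ, (∃ L, LipschitzWith L h) ∧ HasCompactSupport h ∧ (∀ x, α ≤ v x → 1 < h x) ∧
      ∫⁻ x, ‖fderiv ℝ h x‖ₑ ^ p ∂μ ≤
        ENNReal.ofReal (2 / α) ^ p * ∫⁻ x, ‖fderiv ℝ v x‖ₑ ^ p ∂μ := by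
  have htrunc : LipschitzWith K fun x => v x - α / 4 := by
    simpa using hv.sub (LipschitzWith.const (α / 4))
  have hmax := htrunc.max (LipschitzWith.const 0)
  refine ⟨fun x => (2 / α) • max (v x - α / 4) 0, ⟨_, (lipschitzWith_smul (2 / α)).comp hmax⟩,
    ?_, ?_, ?_⟩
  · obtain ⟨S, hS, hvS⟩ := mem_cocompact.1 (hlim.eventually_lt_const (by positivity : 0 < α / 4))
    refine .of_support_subset_isCompact hS fun x hx => by_contra fun hxS => hx ?_
    have hlt : v x < α / 4 := hvS hxS
    simp [hlt.le]
  · intro x hx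
    calc 1 < 2 / α * (α - α / 4) := by field_simp; norm_num
      _ ≤ 2 / α * max (v x - α / 4) 0 := by gcongr; exact le_max_of_le_left (by linarith)
  · calc ∫⁻ x, ‖fderiv ℝ (fun x => (2 / α) • max (v x - α / 4) 0) x‖ₑ ^ p ∂μ
        = ENNReal.ofReal (2 / α) ^ p *
            ∫⁻ x, ‖fderiv ℝ (fun x => max (v x - α / 4) 0) x‖ₑ ^ p ∂μ := by
          rw [← lintegral_const_mul _ ((measurable_fderiv ℝ _).enorm.pow_const p)]
          refine lintegral_congr fun x => ?_
          rw [← Pi.smul_def, fderiv_const_smul_field, Pi.smul_apply, enorm_smul,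
            ENNReal.mul_rpow_of_nonneg _ _ hp.le, Real.enorm_of_nonneg (by positivity)]
      _ ≤ ENNReal.ofReal (2 / α) ^ p * ∫⁻ x, ‖fderiv ℝ v x‖ₑ ^ p ∂μ := by
          gcongr _ * ?_
          simpa [← ofReal_norm, fderiv_sub_const, hp] using
            lintegral_enorm_fderiv_max_rpow_le μ htrunc (LipschitzWith.const 0) p

end SmoothCompetitor

section CapacityEstimate

variable {E : Type*} [NormedAddCommGroup E] [InnerProductSpace ℝ E] [FiniteDimensional ℝ E]
  [MeasurableSpace E] [BorelSpace E] (μ : Measure E) [μ.IsAddHaarMeasure] {p : ℝ}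

lemma exists_lipschitz_le_add_of_le_average (hp : 1 ≤ p) :
    ∃ C : ℝ≥0, ∀ {u : E → ℝ} {K : ℝ≥0} {F : Set E} {r : E → ℝ} {R c : ℝ}, ContDiff ℝ 1 u →
      LipschitzWith K u → IsCompact F → (∀ x ∈ F, 0 < r x) → (∀ x ∈ F, r x ≤ R) →
      (∀ x ∈ F, c ≤ ⨍ y in ball x (r x), u y ∂μ) →
      ∃ H : E → ℝ, (∃ L, LipschitzWith L H) ∧ HasCompactSupport H ∧ (∀ x ∈ F, c ≤ u x + H x) ∧
        ∫⁻ x, ‖fderiv ℝ H x‖ₑ ^ p ∂μ ≤ C * ∫⁻ x, ‖fderiv ℝ u x‖ₑ ^ p ∂μ := by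
  obtain ⟨N, hN⟩ := exists_finset_ball_cover_lintegral_le E
  set A : ℝ≥0 := 2 ^ (p - 1) * (1 + 4 ^ Module.finrank ℝ E) * (1 + 2 ^ p * 2 ^ Module.finrank ℝ E)
  have hA : (A : ℝ≥0∞) =
      2 ^ (p - 1) * (1 + 4 ^ Module.finrank ℝ E) * (1 + 2 ^ p * 2 ^ Module.finrank ℝ E) := by
    simp [A, ENNReal.coe_rpow_of_nonneg, sub_nonneg.2 hp, zero_le_one.trans hp]
  refine ⟨A * N, fun {u K F r R c} hu hK hF hr hR hc => ?_⟩
  obtain ⟨T, hTF, hcover, hoverlap⟩ := hN F r R hF hr hR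
  let e (x : E) := ballExtension x (r x) fun z => (⨍ y in ball x (r x), u y ∂μ) - u z
  have hLip (x) (hx : x ∈ T) : ∃ L, LipschitzWith L (e x) :=
    exists_lipschitzWith_ballExtension (hr x (hTF hx)) ((LipschitzWith.const _).sub hK)
  obtain ⟨H, hHLip, hHsupp, heH, hHint⟩ := exists_lipschitz_majorant μ T hLip
    (fun x hx => hasCompactSupport_ballExtension (hr x (hTF hx))) (zero_lt_one.trans_le hp)
  refine ⟨H, hHLip, hHsupp, fun y hy => ?_, ?_⟩
  · obtain ⟨x, hxT, hyx⟩ := mem_iUnion₂.1 (hcover hy)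
    have hex : e x y = (⨍ z in ball x (r x), u z ∂μ) - u y := ballExtension_of_mem hyx
    linarith [heH x hxT y, hc x (hTF hxT)]
  · calc ∫⁻ x, ‖fderiv ℝ H x‖ₑ ^ p ∂μ ≤ ∑ x ∈ T, ∫⁻ y, ‖fderiv ℝ (e x) y‖ₑ ^ p ∂μ := hHint
      _ ≤ ∑ x ∈ T, A * ∫⁻ y in ball x (r x), ‖fderiv ℝ u y‖ₑ ^ p ∂μ :=
          Finset.sum_le_sum fun x hx => hA ▸
            lintegral_enorm_fderiv_ballExtension_average_sub_rpow_le μ (hr x (hTF hx)) hu hp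
      _ ≤ A * (N * ∫⁻ x, ‖fderiv ℝ u x‖ₑ ^ p ∂μ) := by
          rw [← Finset.mul_sum]
          gcongr
          exact hoverlap μ _
      _ = ↑(A * N) * ∫⁻ x, ‖fderiv ℝ u x‖ₑ ^ p ∂μ := by push_cast; rw [mul_assoc]

lemma exists_lipschitz_one_lt_of_le_average (hp : 1 ≤ p) :
    ∃ C : ℝ≥0, ∀ {u : E → ℝ} {K : ℝ≥0} {F : Set E} {r : E → ℝ} {R α : ℝ}, ContDiff ℝ 1 u →
      LipschitzWith K u → Tendsto u (cocompact E) (𝓝 0) → IsCompact F → (∀ x ∈ F, 0 < r x) →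
      (∀ x ∈ F, r x ≤ R) → 0 < α → (∀ x ∈ F, α ≤ ⨍ y in ball x (r x), u y ∂μ) →
      ∃ h : E → ℝ, (∃ L, LipschitzWith L h) ∧ HasCompactSupport h ∧ (∀ x ∈ F, 1 < h x) ∧
        ∫⁻ x, ‖fderiv ℝ h x‖ₑ ^ p ∂μ ≤
          ENNReal.ofReal (2 / α) ^ p * (C * ∫⁻ x, ‖fderiv ℝ u x‖ₑ ^ p ∂μ) := by
  obtain ⟨C, hC⟩ := exists_lipschitz_le_add_of_le_average μ hp
  refine ⟨2 ^ (p - 1) * (1 + C), fun {u K F r R α} hu hK hlim hF hr hR hα hc => ?_⟩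
  obtain ⟨H, ⟨L, hL⟩, hHsupp, hHF, hHint⟩ := hC hu hK hF hr hR hc
  have hHlim : Tendsto H (cocompact E) (𝓝 0) := hHsupp.is_zero_at_infty
  obtain ⟨h, hhLip, hhsupp, hh, hhint⟩ := exists_lipschitz_one_lt_lintegral_fderiv_le μ (hK.add hL)
    (by simpa using hlim.add hHlim) hα (zero_lt_one.trans_le hp)
  refine ⟨h, hhLip, hhsupp, fun x hx => hh x (hHF x hx), hhint.trans ?_⟩
  gcongr
  calc ∫⁻ x, ‖fderiv ℝ (fun y => u y + H y) x‖ₑ ^ p ∂μ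
      ≤ 2 ^ (p - 1) * (∫⁻ x, ‖fderiv ℝ u x‖ₑ ^ p ∂μ + ∫⁻ x, ‖fderiv ℝ H x‖ₑ ^ p ∂μ) :=
        lintegral_enorm_fderiv_add_rpow_le μ hK hL hp
    _ ≤ 2 ^ (p - 1) * (∫⁻ x, ‖fderiv ℝ u x‖ₑ ^ p ∂μ + C * ∫⁻ x, ‖fderiv ℝ u x‖ₑ ^ p ∂μ) := by
        gcongr
    _ = _ := by
        rw [ENNReal.coe_mul, ENNReal.coe_rpow_of_nonneg _ (sub_nonneg.2 hp)]
        push_cast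
        ring

end CapacityEstimate

section WeakDerivativeEstimate

variable {E : Type*} [NormedAddCommGroup E] [NormedSpace ℝ E] [FiniteDimensional ℝ E]
  [MeasurableSpace E] [BorelSpace E] {μ : Measure E} [μ.IsAddHaarMeasure] {f : E → ℝ}
  {f' : E → E →L[ℝ] ℝ} {φ : ContDiffBump (0 : E)} {p : ℝ}

lemma exists_contDiffBump_le_average_mollify (hf : LocallyIntegrable f μ) {F : Set E}
    (hF : IsCompact F) {α : ℝ} (hα : ∀ x ∈ F, ∃ ρ, 0 < ρ ∧ α < ⨍ y in ball x ρ, f y ∂μ) :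
    ∃ (φ : ContDiffBump (0 : E)) (r : E → ℝ) (R : ℝ), ∀ x ∈ F, 0 < r x ∧ r x ≤ R ∧
      α ≤ ⨍ y in ball x (r x), mollify φ μ f y ∂μ := by
  let U (ρ : ℝ) : Set E := {x | α < ⨍ y in ball x ρ, f y ∂μ}
  have hU (ρ) (hρ : 0 < ρ) : IsOpen (U ρ) :=
    isOpen_lt continuous_const (continuous_setAverage_ball hf (ne_of_gt hρ))
  obtain ⟨S, hS0, hSfin, hFS⟩ := hF.elim_finite_subcover_image (b := Ioi 0) hU
    fun x hx => mem_iUnion₂.2 <| by simpa [U] using hα x hx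
  obtain ⟨δ, hδ, hball⟩ := lebesgue_number_lemma_of_metric hF
    (fun ρ : S => hU ρ (hS0 ρ.2)) (by simpa only [iUnion_coe_set] using hFS)
  simp only [Subtype.exists, exists_prop] at hball
  obtain ⟨R, hR⟩ := hSfin.bddAbove
  choose! r hr using hball
  refine ⟨⟨δ / 2, δ, half_pos hδ, half_lt_self hδ⟩, r, R, fun x hx => ?_⟩
  obtain ⟨hrS, hrU⟩ := hr x hx
  have hr0 : 0 < r x := hS0 hrS
  exact ⟨hr0, hR hrS, le_setAverage_ball_mollify hf hr0.ne' fun y hy => (hrU hy).le⟩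

lemma HasWeakFDeriv.exists_lipschitzWith_mollify (h : HasWeakFDeriv f f' μ)
    (hf : LocallyIntegrable f μ) (hf' : MemLp f' (.ofReal p) μ) (hp : 1 ≤ p) :
    ∃ K, LipschitzWith K (mollify φ μ f) := by
  have hp' : 1 ≤ ENNReal.ofReal p := ENNReal.one_le_ofReal.2 hp
  obtain ⟨M, hM⟩ := exists_nnnorm_mollify_le (φ := φ) hf' hp
  refine ⟨M, lipschitzWith_of_nnnorm_fderiv_le
    ((contDiff_mollify (n := 1) hf).differentiable one_ne_zero) ?_⟩
  rwa [h.fderiv_mollify hf (hf'.locallyIntegrable hp')]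

end WeakDerivativeEstimate

theorem exists_contDiff_one_le_of_lt_average {E : Type*} [NormedAddCommGroup E]
    [InnerProductSpace ℝ E] [FiniteDimensional ℝ E] [MeasurableSpace E] [BorelSpace E]
    (μ : Measure E) [μ.IsAddHaarMeasure] {p : ℝ} (hp : 1 ≤ p) :
    ∃ C : ℝ≥0, ∀ {f : E → ℝ} {f' : E → E →L[ℝ] ℝ} {F : Set E} {α : ℝ},
      HasWeakFDeriv f f' μ → MemLp f (.ofReal p) μ → MemLp f' (.ofReal p) μ → IsCompact F →
      0 < α → (∀ x ∈ F, ∃ ρ, 0 < ρ ∧ α < ⨍ y in ball x ρ, f y ∂μ) →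
      ∃ v : E → ℝ, ContDiff ℝ (⊤ : ℕ∞) v ∧ HasCompactSupport v ∧ (∀ x ∈ F, 1 ≤ v x) ∧
        ∫⁻ x, ‖fderiv ℝ v x‖ₑ ^ p ∂μ ≤
          ENNReal.ofReal (2 / α) ^ p * (C * ∫⁻ x, ‖f' x‖ₑ ^ p ∂μ) := by
  have hp' : 1 ≤ ENNReal.ofReal p := ENNReal.one_le_ofReal.2 hp
  obtain ⟨C, hC⟩ := exists_lipschitz_one_lt_of_le_average μ hp
  refine ⟨C, fun {f f' F α} hff' hf hf' hF hα hFα => ?_⟩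
  have hfloc := hf.locallyIntegrable hp'
  obtain ⟨φ, r, R, hφ⟩ := exists_contDiffBump_le_average_mollify hfloc hF hFα
  obtain ⟨K, hK⟩ := hff'.exists_lipschitzWith_mollify (φ := φ) hfloc hf' hp
  obtain ⟨h, ⟨L, hL⟩, hsupp, hFh, hint⟩ := hC (contDiff_mollify (n := 1) hfloc) hK
    (tendsto_mollify_cocompact hf hp) hF (fun x hx => (hφ x hx).1)
    (fun x hx => (hφ x hx).2.1) hα fun x hx => (hφ x hx).2.2
  obtain ⟨v, hv, hvsupp, hFv, hvint⟩ :=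
    exists_contDiff_one_le_lintegral_fderiv_le (μ := μ) hL hsupp hF hFh hp
  refine ⟨v, hv, hvsupp, hFv, (hvint.trans hint).trans ?_⟩
  rw [hff'.fderiv_mollify hfloc (hf'.locallyIntegrable hp')]
  gcongr _ * (_ * ?_)
  exact lintegral_enorm_mollify_rpow_le hf'.1 hp

namespace MemW1p

variable {n : ℕ} {p : ℝ} {f : En n → ℝ} {g : En n → En n}

lemma memLp (h : MemW1p p f g) (hp : 0 < p) : MemLp f (.ofReal p) := by
  rw [← integrable_norm_rpow_iff h.1 (by simpa using hp) ENNReal.ofReal_ne_top,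
    ENNReal.toReal_ofReal hp.le]
  exact h.2.2.2.1

lemma memLp_gradient (h : MemW1p p f g) (hp : 0 < p) : MemLp g (.ofReal p) := by
  rw [← integrable_norm_rpow_iff h.2.1 (by simpa using hp) ENNReal.ofReal_ne_top,
    ENNReal.toReal_ofReal hp.le]
  exact h.2.2.2.2

lemma locallyIntegrable (h : MemW1p p f g) (hp : 1 ≤ p) : LocallyIntegrable f :=
  (h.memLp (zero_lt_one.trans_le hp)).locallyIntegrable (ENNReal.one_le_ofReal.2 hp)

lemma locallyIntegrable_gradient (h : MemW1p p f g) (hp : 1 ≤ p) : LocallyIntegrable g :=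
  (h.memLp_gradient (zero_lt_one.trans_le hp)).locallyIntegrable (ENNReal.one_le_ofReal.2 hp)

lemma hasWeakFDeriv (h : MemW1p p f g) (hp : 1 ≤ p) :
    HasWeakFDeriv f (fun x => innerSL ℝ (g x)) volume := by
  intro η hη hηsupp v
  have hv : v = ∑ i, v i • EuclideanSpace.single i (1 : ℝ) := by
    simpa using ((EuclideanSpace.basisFun (Fin n) ℝ).sum_repr v).symm
  have hfη (i) : Integrable fun x => f x * fderiv ℝ η x (EuclideanSpace.single i 1) :=
    (h.locallyIntegrable hp).integrable_smul_right_of_hasCompactSupport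
      ((hη.continuous_fderiv (by simp)).clm_apply continuous_const) (hηsupp.fderiv_apply ℝ _)
  have hgη (i) : Integrable fun x => g x i * η x := by
    have hηg : Integrable fun x => η x • g x :=
      (h.locallyIntegrable_gradient hp).integrable_smul_left_of_hasCompactSupport
        hη.continuous hηsupp
    simpa [mul_comm] using (EuclideanSpace.proj (𝕜 := ℝ) i).integrable_comp hηg
  calc ∫ x, f x * fderiv ℝ η x v
      = ∑ i, v i * ∫ x, f x * fderiv ℝ η x (EuclideanSpace.single i 1) := by
        simp_rw [← integral_const_mul]
        rw [← integral_finsetSum _ fun i _ => (hfη i).const_mul (v i)]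
        congr with x
        conv_lhs => rw [hv, map_sum, Finset.mul_sum]
        simp only [map_smul, smul_eq_mul, mul_left_comm]
    _ = ∑ i, v i * -∫ x, g x i * η x := by
        congr! 2 with i
        exact h.2.2.1 i η ⟨hη, hηsupp, subset_univ _⟩
    _ = -∫ x, innerSL ℝ (g x) v * η x := by
        simp_rw [mul_neg, Finset.sum_neg_distrib, ← integral_const_mul]
        rw [← integral_finsetSum _ fun i _ => (hgη i).const_mul (v i)]
        simp only [innerSL_apply_apply, PiLp.inner_apply, RCLike.inner_apply, conj_trivial,
          Finset.sum_mul, mul_assoc]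

end MemW1p

lemma cap_le_of_forall_isCompact {n : ℕ} {p : ℝ} {U : Set (En n)} (hU : IsOpen U) {c : ℝ≥0∞}
    (hc : ∀ F ⊆ U, IsCompact F → capK p F ≤ c) : cap p U ≤ c :=
  (iInf₂_le U ⟨Subset.rfl, hU⟩).trans (iSup₂_le fun F hF => hc F hF.1 hF.2)

lemma exists_capK_le_of_lt_ballAvg {n : ℕ} {p : ℝ} (hp : 1 ≤ p) :
    ∃ C : ℝ, 0 < C ∧ ∀ {f : En n → ℝ} {g : En n → En n} {F : Set (En n)} {α : ℝ}, MemW1p p f g →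
      IsCompact F → 0 < α → (∀ x ∈ F, ∃ ρ, 0 < ρ ∧ α < ballAvg f x ρ) →
      capK p F ≤ ENNReal.ofReal (C / α ^ p) * ∫⁻ x, ‖g x‖ₑ ^ p := by
  have hp0 : 0 < p := zero_lt_one.trans_le hp
  obtain ⟨C, hC⟩ := exists_contDiff_one_le_of_lt_average (E := En n) volume hp
  refine ⟨2 ^ p * (C + 1), by positivity, fun {f g F α} hfg hF hα hFα => ?_⟩
  obtain ⟨v, hv, hvsupp, hFv, hvint⟩ := hC (hfg.hasWeakFDeriv hp) (hfg.memLp hp0)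
    ((innerSL ℝ).comp_memLp' (hfg.memLp_gradient hp0)) hF hα hFα
  calc capK p F ≤ ∫⁻ x, ‖fderiv ℝ v x‖ₑ ^ p := iInf₂_le v ⟨hv, hvsupp, hFv⟩
    _ ≤ ENNReal.ofReal (2 / α) ^ p * (C * ∫⁻ x, ‖innerSL ℝ (g x)‖ₑ ^ p) := hvint
    _ = ENNReal.ofReal (2 ^ p * C / α ^ p) * ∫⁻ x, ‖g x‖ₑ ^ p := by
        simp only [← ofReal_norm, innerSL_apply_norm]
        rw [ENNReal.ofReal_rpow_of_nonneg (by positivity) hp0.le, ← mul_assoc,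
          ← ENNReal.ofReal_coe_nnreal, ← ENNReal.ofReal_mul (by positivity),
          Real.div_rpow zero_le_two hα.le, div_mul_eq_mul_div]
    _ ≤ ENNReal.ofReal (2 ^ p * (C + 1) / α ^ p) * ∫⁻ x, ‖g x‖ₑ ^ p := by
        gcongr
        linarith

/-- the Chebyshev type inequality for `p`-capacity. -/
theorem chebyshev_capacity {n : ℕ} (p : ℝ) (hp : 1 ≤ p) :
    ∃ C : ℝ, 0 < C ∧
      ∀ (f : En n → ℝ) (g : En n → En n), MemW1p p f g →
        ∀ α : ℝ, 0 < α →
          cap p (Set.univ \ {x : En n | ∀ ρ : ℝ, 0 < ρ → ballAvg f x ρ ≤ α}) ≤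
            ENNReal.ofReal (C / α ^ p) * ∫⁻ x, (‖g x‖₊ : ℝ≥0∞) ^ p := by
  obtain ⟨C, hC0, hC⟩ := exists_capK_le_of_lt_ballAvg (n := n) hp
  refine ⟨C, hC0, fun f g hfg α hα => ?_⟩
  have hsuperlevel : univ \ {x | ∀ ρ : ℝ, 0 < ρ → ballAvg f x ρ ≤ α} =
      ⋃ ρ > 0, {x | α < ballAvg f x ρ} := by
    ext x
    simp
  have hopen : IsOpen (⋃ ρ > 0, {x | α < ballAvg f x ρ}) :=
    isOpen_biUnion fun ρ hρ => isOpen_lt continuous_const <| continuous_setAverage_ball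
      (hfg.locallyIntegrable hp) (ne_of_gt hρ)
  rw [hsuperlevel]
  refine cap_le_of_forall_isCompact hopen fun F hF hFcompact => hC hfg hFcompact hα fun x hx => ?_
  simpa using hF hx
end
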